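/- Let p_v = 2^{-𝒩_V(v)·(n+5)} for every vertex v ≠ s of 𝔅_n, and let π_0' be the twin policy of π_0. Then LargestIncrease(𝔇_n, π_0') performs at least 2^n − 1 improving switches before terminating. -/

import Mathlib

/-! ## The Markov decision process `𝔅_n` -/

/-- Vertices of the MDP `𝔅_n`: a transportation vertex `t`, a sink `s`, a dummy vertex `d`,
and vertices `a i`, `b i` for `i ∈ {1,…,n}`. -/
inductive BV : Type where
  | t : BV
  | s : BV
  | d : BV
  | a : ℕ → BV
  | b : ℕ → BV
deriving DecidableEq

/-- The vertex `a i` for `i ∈ {1,…,n+1}`, with the convention `a (n+1) = s`. -/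
def aN (n i : ℕ) : BV := if i = n + 1 then BV.s else BV.a i

/-- The vertex `b i` for `i ∈ {1,…,n+1}`, with the convention `b (n+1) = d`. -/
def bN (n i : ℕ) : BV := if i = n + 1 then BV.d else BV.b i

/-- The vertex set of `𝔅_n`. -/
def IsBVertex (n : ℕ) : BV → Prop
  | BV.t => True
  | BV.s => True
  | BV.d => True
  | BV.a i => 1 ≤ i ∧ i ≤ n
  | BV.b i => 1 ≤ i ∧ i ≤ n

/-- The edge relation of `𝔅_n`: travel, enter, skip, board, stay, leave edges,
the edge `(d,s)` and the self-loop `(s,s)`. -/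
def BEdge (n : ℕ) (u v : BV) : Prop :=
  (∃ i, 1 ≤ i ∧ i ≤ n ∧ u = BV.t ∧ v = BV.a i) ∨
  (∃ i, 1 ≤ i ∧ i ≤ n ∧ u = BV.a i ∧ v = BV.b i) ∨
  (∃ i, 1 ≤ i ∧ i ≤ n ∧ u = BV.a i ∧ v = aN n (i + 1)) ∨
  (∃ i, 1 ≤ i ∧ i ≤ n ∧ u = BV.a i ∧ v = BV.t) ∨
  (∃ i, 1 ≤ i ∧ i ≤ n ∧ u = BV.b i ∧ v = bN n (i + 1)) ∨
  (∃ i, 1 ≤ i ∧ i ≤ n ∧ u = BV.b i ∧ v = aN n (i + 1)) ∨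
  (u = BV.d ∧ v = BV.s) ∨ (u = BV.s ∧ v = BV.s)

/-- The reward function of `𝔅_n`: `r(enter i) = 2^i`, `r(stay i) = 3/4`,
`r(board i) = -2^i + 5/4`, and reward `0` on all other edges. -/
def rB (n : ℕ) (u v : BV) : ℚ :=
  match u, v with
  | BV.a i, BV.b j => if i = j then 2 ^ i else 0
  | BV.a i, BV.t => -(2 ^ i) + 5 / 4
  | BV.b i, BV.b j => if j = i + 1 then 3 / 4 else 0
  | BV.b i, BV.d => if i = n then 3 / 4 else 0
  | _, _ => 0

/-- A policy for `𝔅_n` chooses an outgoing edge at every vertex. -/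
def IsBPolicy (n : ℕ) (π : BV → BV) : Prop := ∀ u, IsBVertex n u → BEdge n u (π u)

/-- A policy is weak unichain if it reaches the sink `s` from every vertex. -/
def BWeakUnichain (n : ℕ) (π : BV → BV) : Prop :=
  ∀ u, IsBVertex n u → ∃ k, π^[k] u = BV.s

open Classical in
/-- The value of a vertex `v` w.r.t. a (weak unichain) policy `π`:
the sum of the rewards along the path that `π` takes from `v` to the sink `s`. -/
noncomputable def BVal (n : ℕ) (π : BV → BV) (v : BV) : ℚ :=
  if h : ∃ k, π^[k] v = BV.s then
    ∑ i ∈ Finset.range (Nat.find h), rB n (π^[i] v) (π^[i + 1] v)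
  else 0

/-- The reduced costs of the edge `(u,v)` w.r.t. the policy `π`. -/
noncomputable def zB (n : ℕ) (π : BV → BV) (u v : BV) : ℚ :=
  rB n u v + BVal n π v - BVal n π u

/-- The edge `(u,v)` is an improving switch for `π` if its reduced costs are positive. -/
def BImproving (n : ℕ) (π : BV → BV) (u v : BV) : Prop :=
  BEdge n u v ∧ 0 < zB n π u v

/-- The Bland numbering `𝒩_{𝔅_n}` of the edges of `𝔅_n`. -/
def NB (n : ℕ) (u v : BV) : ℕ :=
  match u, v with
  | BV.t, BV.a i => i
  | BV.a i, BV.b _ => n + 1 + 5 * (i - 1)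
  | BV.a i, BV.a _ => n + 2 + 5 * (i - 1)
  | BV.a i, BV.s => n + 2 + 5 * (i - 1)
  | BV.a i, BV.t => n + 3 + 5 * (i - 1)
  | BV.b i, BV.b _ => n + 4 + 5 * (i - 1)
  | BV.b i, BV.d => n + 4 + 5 * (i - 1)
  | BV.b i, BV.a _ => n + 5 + 5 * (i - 1)
  | BV.b i, BV.s => n + 5 + 5 * (i - 1)
  | BV.d, BV.s => 6 * n + 1
  | BV.s, BV.s => 6 * n + 2
  | _, _ => 0

/-- One step of Bland's policy iteration with edge numbering `N`:
apply the improving switch with the smallest number. -/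
def IsBlandStep (n : ℕ) (N : BV → BV → ℕ) (π π' : BV → BV) : Prop :=
  ∃ u v, BImproving n π u v ∧ (∀ u' v', BImproving n π u' v' → N u v ≤ N u' v') ∧
    π' = Function.update π u v

/-- `BlandReaches n N π ψ` says that Bland's policy iteration started at `π` visits `ψ`. -/
def BlandReaches (n : ℕ) (N : BV → BV → ℕ) : (BV → BV) → (BV → BV) → Prop :=
  Relation.ReflTransGen (IsBlandStep n N)

/-- The canonical policy `π_0` for `0`: `travel 1`, `skip i` and `leave i` are active. -/
def pi0 (n : ℕ) : BV → BV := fun u =>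
  match u with
  | BV.t => BV.a 1
  | BV.a i => aN n (i + 1)
  | BV.b i => aN n (i + 1)
  | BV.d => BV.s
  | BV.s => BV.s

/-- The optimal policy `π_*`: `travel 1`, `enter i` for all `i`, `leave j` for `j < n`,
and `stay n` are active. -/
def piStar (n : ℕ) : BV → BV := fun u =>
  match u with
  | BV.t => BV.a 1
  | BV.a i => BV.b i
  | BV.b i => if i = n then BV.d else BV.a (i + 1)
  | BV.d => BV.s
  | BV.s => BV.s

/-! ## Bits and canonical policies -/

/-- The least significant set bit `ℓ_1(x)` (1-based). -/
noncomputable def lsb (x : ℕ) : ℕ := sInf {i | 1 ≤ i ∧ Nat.testBit x (i - 1)}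

/-- The most significant set bit `m(x)` (1-based). -/
noncomputable def msb1 (x : ℕ) : ℕ := sSup {i | 1 ≤ i ∧ Nat.testBit x (i - 1)}

/-- The least unset bit `ℓ_0(x)` (1-based). -/
noncomputable def lzero (x : ℕ) : ℕ := sInf {i | 1 ≤ i ∧ ¬ Nat.testBit x (i - 1)}

/-- `L_i(x) = max { j ≤ i-2 | x_j = 1 or j = 1 }` (1-based bits). -/
noncomputable def Lfun (i x : ℕ) : ℕ :=
  sSup {j | 1 ≤ j ∧ j ≤ i - 2 ∧ (Nat.testBit x (j - 1) ∨ j = 1)}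

/-- `IsCanonical n x π` says that `π` is the canonical policy `π_x` for `x`. -/
noncomputable def IsCanonical (n x : ℕ) (π : BV → BV) : Prop :=
  IsBPolicy n π ∧
  if x = 0 then
    π BV.t = BV.a 1 ∧
      ∀ i, 1 ≤ i → i ≤ n → π (BV.a i) = aN n (i + 1) ∧ π (BV.b i) = aN n (i + 1)
  else
    π BV.t = BV.a (lsb x) ∧
    π (BV.b (msb1 x)) = aN n (msb1 x + 1) ∧
    (∀ i, msb1 x < i → i ≤ n → π (BV.a i) = aN n (i + 1) ∧ π (BV.b i) = aN n (i + 1)) ∧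
    ∀ i, 1 ≤ i → i ≤ n → Nat.testBit x (i - 1) →
      π (BV.a i) = BV.b i ∧
      (i = 2 → π (BV.b 1) = BV.a 2 ∧ (¬ Nat.testBit x 0 → π (BV.a 1) = BV.a 2)) ∧
      (3 ≤ i → Nat.testBit x (i - 2) → π (BV.b (i - 1)) = BV.a i) ∧
      (3 ≤ i → ¬ Nat.testBit x (i - 2) →
        π (BV.b (i - 1)) = BV.b i ∧ π (BV.a (i - 1)) = BV.a i ∧
        π (BV.b (i - 2)) = BV.a (i - 1) ∧
        (Lfun i x < i - 2 →
          ∀ j, Lfun i x + 1 ≤ j → j ≤ i - 2 →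
            π (BV.a j) = BV.t ∧ π (BV.b (j - 1)) = BV.b j) ∧
        (Lfun i x = 1 → ¬ Nat.testBit x 0 → π (BV.a 1) = BV.t))

/-- Activating a list of edges in a policy, from left to right. -/
def activateList (π : BV → BV) (L : List (BV × BV)) : BV → BV :=
  L.foldl (fun σ e => Function.update σ e.1 e.2) π

/-- The canonical phases w.r.t. an odd number `x` (with `ℓ := ℓ_0(x)`), as a list of edges
to be activated in order. -/
noncomputable def phaseList (n x : ℕ) : List (BV × BV) :=
  let ℓ := lzero x
  (if Nat.testBit x ℓ then [(BV.b ℓ, aN n (ℓ + 1))] else []) ++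
  (if Nat.testBit x ℓ ∨ msb1 x < ℓ then [(BV.b (ℓ - 1), BV.b ℓ)] else []) ++
  [(BV.a ℓ, BV.b ℓ), (BV.t, BV.a ℓ)] ++
  ((List.range (ℓ - 2)).map fun j => (BV.a (j + 1), BV.t)) ++
  [(BV.a (ℓ - 1), BV.a ℓ)] ++
  (((List.range (ℓ - 3)).reverse).map fun j => (BV.b (j + 1), BV.b (j + 2))) ++
  (if ℓ = 2 then [(BV.b 1, BV.a 2)] else [])

/-! ## The Markov decision process `𝔇_n` -/

/-- Vertices of `𝔇_n`: the original vertices (`base`), and for every edge `(v,w)` of `𝔅_n`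
other than the self-loop, the gadget vertices `x v w`, `y v w`, `z v w`. -/
inductive DV : Type where
  | base : BV → DV
  | x : BV → BV → DV
  | y : BV → BV → DV
  | z : BV → BV → DV
deriving DecidableEq

/-- The edges of `𝔅_n` that get replaced by gadgets (all edges except the self-loop `(s,s)`). -/
def DEdgePair (n : ℕ) (v w : BV) : Prop := BEdge n v w ∧ v ≠ BV.s

/-- The vertex set of `𝔇_n`. -/
def IsDVertex (n : ℕ) : DV → Prop
  | DV.base v => IsBVertex n v
  | DV.x v w => DEdgePair n v w
  | DV.y v w => DEdgePair n v w
  | DV.z v w => DEdgePair n v w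

/-- The agent vertices of `𝔇_n` (all vertices except the randomization vertices `y v w`). -/
def IsDAgent (n : ℕ) : DV → Prop
  | DV.base v => IsBVertex n v
  | DV.x v w => DEdgePair n v w
  | DV.y _ _ => False
  | DV.z v w => DEdgePair n v w

/-- The agent edges of `𝔇_n`. -/
def DEdge (n : ℕ) (u u' : DV) : Prop :=
  (∃ v w, DEdgePair n v w ∧
    ((u = DV.base v ∧ u' = DV.x v w) ∨ (u = DV.x v w ∧ u' = DV.base v) ∨
     (u = DV.x v w ∧ u' = DV.y v w) ∨ (u = DV.z v w ∧ u' = DV.base w))) ∨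
  (u = DV.base BV.s ∧ u' = DV.base BV.s)

/-- The reward function of `𝔇_n`: the edge `(z v w, w)` carries the reward of the original
edge `(v,w)`; all other agent edges have reward `0`. -/
def rD (n : ℕ) (u u' : DV) : ℚ :=
  match u, u' with
  | DV.z v w, DV.base w' => if w' = w then rB n v w else 0
  | _, _ => 0

/-- A policy for `𝔇_n` chooses an outgoing agent edge at every agent vertex. -/
def IsDPolicy (n : ℕ) (π : DV → DV) : Prop := ∀ u, IsDAgent n u → DEdge n u (π u)

/-- `IsDVal n p π V` says that `V` satisfies the Bellman equations characterizing the value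
function of the policy `π` for `𝔇_n` with probabilities `p`, with `V s = 0`. -/
def IsDVal (n : ℕ) (p : BV → ℚ) (π : DV → DV) (V : DV → ℚ) : Prop :=
  V (DV.base BV.s) = 0 ∧
  (∀ u, IsDAgent n u → V u = rD n u (π u) + V (π u)) ∧
  (∀ v w, DEdgePair n v w →
    V (DV.y v w) = p v * V (DV.z v w) + (1 - p v) * V (DV.base v))

open Classical in
/-- The value function of a (weak unichain) policy `π` for `𝔇_n`: the unique solution of the
Bellman equations (normalized to `0` outside the vertex set). -/
noncomputable def DVal (n : ℕ) (p : BV → ℚ) (π : DV → DV) : DV → ℚ :=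
  if h : ∃! V : DV → ℚ, IsDVal n p π V ∧ ∀ u, ¬ IsDVertex n u → V u = 0 then
    h.exists.choose
  else fun _ => 0

/-- The reduced costs of an agent edge `(u,u')` of `𝔇_n` w.r.t. the policy `π`. -/
noncomputable def zD (n : ℕ) (p : BV → ℚ) (π : DV → DV) (u u' : DV) : ℚ :=
  rD n u u' + DVal n p π u' - DVal n p π u

/-- An agent edge of `𝔇_n` is an improving switch if its reduced costs are positive. -/
def DImproving (n : ℕ) (p : BV → ℚ) (π : DV → DV) (u u' : DV) : Prop :=
  DEdge n u u' ∧ 0 < zD n p π u u'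

/-- One (agent or positive-probability randomization) step of the process `𝔇_n` under `π`. -/
def DStep (n : ℕ) (p : BV → ℚ) (π : DV → DV) (u u' : DV) : Prop :=
  (IsDAgent n u ∧ u' = π u) ∨
  (∃ v w, DEdgePair n v w ∧ u = DV.y v w ∧
    ((u' = DV.z v w ∧ 0 < p v) ∨ (u' = DV.base v ∧ 0 < 1 - p v)))

/-- A policy for `𝔇_n` is weak unichain if it reaches `s` with probability one from every
vertex, i.e. `s` is reachable via active/positive-probability steps from every vertex. -/
def DWeakUnichain (n : ℕ) (p : BV → ℚ) (π : DV → DV) : Prop :=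
  ∀ u, IsDVertex n u → Relation.ReflTransGen (DStep n p π) u (DV.base BV.s)

/-- The twin policy of a policy `π` for `𝔅_n`: every vertex `v ≠ s` is `π v`-oriented. -/
def twin (π : BV → BV) : DV → DV := fun u =>
  match u with
  | DV.base v => if v = BV.s then DV.base BV.s else DV.x v (π v)
  | DV.x v w => if w = π v then DV.y v w else DV.base v
  | DV.y v w => DV.y v w
  | DV.z _ w => DV.base w

/-- The vertex numbering `𝒩_V` of `𝔅_n`: the order `(t, a 1, b 1, a 2, b 2, …, a n, b n, d, s)`. -/
def NV (n : ℕ) : BV → ℕ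
  | BV.t => 1
  | BV.a i => 2 * i
  | BV.b i => 2 * i + 1
  | BV.d => 2 * n + 2
  | BV.s => 2 * n + 3

/-- The specific probabilities `p_v = 2^{-𝒩_V(v)·(n+5)}`. -/
noncomputable def pSpec (n : ℕ) (v : BV) : ℚ := (2 : ℚ) ^ (-((NV n v * (n + 5) : ℕ) : ℤ))

/-- The set `B(v)` of agent edges of `𝔇_n` belonging to the vertex `v`. -/
def Belongs (n : ℕ) (v : BV) (e : DV × DV) : Prop :=
  ∃ w, DEdgePair n v w ∧
    (e = (DV.x v w, DV.y v w) ∨ e = (DV.base v, DV.x v w) ∨ e = (DV.x v w, DV.base v))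

/-- Applying the improving switch `e` to the policy `π` yields `π'`. -/
def DApply (n : ℕ) (p : BV → ℚ) (π : DV → DV) (e : DV × DV) (π' : DV → DV) : Prop :=
  DImproving n p π e.1 e.2 ∧ π' = Function.update π e.1 e.2

/-- One step of Bland's policy iteration on `𝔇_n` with edge numbering `N`. -/
def IsBlandStepD (n : ℕ) (p : BV → ℚ) (N : DV → DV → ℕ) (π π' : DV → DV) : Prop :=
  ∃ u u', DImproving n p π u u' ∧ (∀ a b, DImproving n p π a b → N u u' ≤ N a b) ∧
    π' = Function.update π u u'

/-- One step of Dantzig's policy iteration on `𝔇_n`: apply an improving switch of maximal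
reduced costs. -/
def DantzigStep (n : ℕ) (p : BV → ℚ) (π π' : DV → DV) : Prop :=
  ∃ u u', DImproving n p π u u' ∧
    (∀ a b, DImproving n p π a b → zD n p π a b ≤ zD n p π u u') ∧
    π' = Function.update π u u'

/-- The finite set of vertices of `𝔅_n`, as a `Finset`. -/
noncomputable def BVSet (n : ℕ) : Finset BV :=
  {BV.t, BV.d, BV.s} ∪ (Finset.Icc 1 n).image BV.a ∪ (Finset.Icc 1 n).image BV.b

/-- The finite set of agent vertices of `𝔇_n`, as a `Finset`. -/
noncomputable def DAgentSet (n : ℕ) : Finset DV := by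
  classical
  exact ((BVSet n).image DV.base) ∪
    (((BVSet n ×ˢ BVSet n).filter fun e => DEdgePair n e.1 e.2).image fun e => DV.x e.1 e.2) ∪
    (((BVSet n ×ˢ BVSet n).filter fun e => DEdgePair n e.1 e.2).image fun e => DV.z e.1 e.2)

/-- The objective of the Largest Increase rule: the sum of the values of all agent vertices. -/
noncomputable def LIobj (n : ℕ) (p : BV → ℚ) (π : DV → DV) : ℚ :=
  ∑ u ∈ DAgentSet n, DVal n p π u

/-- One step of the Largest Increase policy iteration on `𝔇_n`: apply an improving switch
maximizing the sum of all agent vertex values of the resulting policy. -/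
def LIStep (n : ℕ) (p : BV → ℚ) (π π' : DV → DV) : Prop :=
  ∃ u u', DImproving n p π u u' ∧
    (∀ a b, DImproving n p π a b →
      LIobj n p (Function.update π a b) ≤ LIobj n p (Function.update π u u')) ∧
    π' = Function.update π u u'

/-- `N` is a Bland numbering `𝒩_{𝔇_n}` for `𝔇_n`: it is injective on agent edges, the edges
`(x v w, v)` all come first, within each gadget `(x v w, y v w)` precedes `(v, x v w)`,
the gadget blocks are ordered according to `𝒩_{𝔅_n}`, and the self-loop comes last. -/
def IsDBlandNumbering (n : ℕ) (N : DV → DV → ℕ) : Prop :=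
  (∀ u₁ u₂ u₁' u₂', DEdge n u₁ u₂ → DEdge n u₁' u₂' → N u₁ u₂ = N u₁' u₂' →
    u₁ = u₁' ∧ u₂ = u₂') ∧
  (∀ v w v' w', DEdgePair n v w → DEdgePair n v' w' →
    N (DV.x v w) (DV.base v) < N (DV.x v' w') (DV.y v' w')) ∧
  (∀ v w, DEdgePair n v w → N (DV.x v w) (DV.y v w) < N (DV.base v) (DV.x v w)) ∧
  (∀ v w v' w', DEdgePair n v w → DEdgePair n v' w' → NB n v w < NB n v' w' →
    N (DV.base v) (DV.x v w) < N (DV.x v' w') (DV.y v' w')) ∧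
  (∀ v w, DEdgePair n v w → N (DV.base v) (DV.x v w) < N (DV.base BV.s) (DV.base BV.s))

namespace LI

/-- Good policies: valid, weak unichain, nonnegative values. -/
structure Good (n : ℕ) (π : BV → BV) : Prop where
  pol : IsBPolicy n π
  uni : BWeakUnichain n π
  nonneg : ∀ v, IsBVertex n v → 0 ≤ BVal n π v

lemma edge_vertex {n : ℕ} {u v : BV} (h : BEdge n u v) : IsBVertex n u ∧ IsBVertex n v := by
  rcases h with ⟨i, h1, h2, rfl, rfl⟩ | ⟨i, h1, h2, rfl, rfl⟩ | ⟨i, h1, h2, rfl, rfl⟩ |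
    ⟨i, h1, h2, rfl, rfl⟩ | ⟨i, h1, h2, rfl, rfl⟩ | ⟨i, h1, h2, rfl, rfl⟩ | ⟨rfl, rfl⟩ | ⟨rfl, rfl⟩
  all_goals (try unfold aN); (try unfold bN); (try split_ifs) <;> simp [IsBVertex] <;> omega

lemma pol_s {n : ℕ} {π : BV → BV} (h : IsBPolicy n π) : π BV.s = BV.s := by
  have := h BV.s trivial
  simpa [BEdge] using this

lemma bval_s (n : ℕ) (π : BV → BV) : BVal n π BV.s = 0 := by
  classical
  have h : ∃ k, π^[k] BV.s = BV.s := ⟨0, rfl⟩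
  have h0 : Nat.find h = 0 := by rw [Nat.find_eq_zero]; rfl
  unfold BVal
  rw [dif_pos h]
  have : ∀ m, m = 0 → ∑ i ∈ Finset.range m, rB n (π^[i] BV.s) (π^[i + 1] BV.s) = 0 := by
    rintro m rfl; simp
  apply this
  convert h0

lemma bval_step {n : ℕ} {π : BV → BV} (hu : BWeakUnichain n π) {v : BV} (hv : IsBVertex n v)
    (hs : v ≠ BV.s) : BVal n π v = rB n v (π v) + BVal n π (π v) := by
  classical
  have h := hu v hv
  have h' : ∃ k, π^[k] (π v) = BV.s := by
    obtain ⟨k, hk⟩ := h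
    cases k with
    | zero => exact absurd hk hs
    | succ k => exact ⟨k, by simpa [Function.iterate_succ_apply] using hk⟩
  have key : Nat.find h = Nat.find h' + 1 := by
    rw [Nat.find_eq_iff]
    refine ⟨?_, ?_⟩
    · rw [Function.iterate_succ_apply]; exact Nat.find_spec h'
    · intro m hm
      cases m with
      | zero => exact hs
      | succ m =>
        rw [Function.iterate_succ_apply]
        exact Nat.find_min h' (by omega)
  unfold BVal
  rw [dif_pos h, dif_pos h']
  have : ∀ a b, a = b + 1 → ∑ i ∈ Finset.range a, rB n (π^[i] v) (π^[i + 1] v) =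
      rB n v (π v) + ∑ i ∈ Finset.range b, rB n (π^[i] (π v)) (π^[i + 1] (π v)) := by
    rintro a b rfl
    rw [Finset.sum_range_succ']
    simp only [Function.iterate_succ_apply, Function.iterate_zero_apply]
    ring
  apply this
  convert key

/-- Induction along the path of a weak unichain policy. -/
lemma path_ind {n : ℕ} {π : BV → BV} (hp : IsBPolicy n π) (hu : BWeakUnichain n π)
    (P : BV → Prop) (h0 : P BV.s)
    (h1 : ∀ v, IsBVertex n v → v ≠ BV.s → P (π v) → P v) :
    ∀ v, IsBVertex n v → P v := by
  have : ∀ k v, IsBVertex n v → π^[k] v = BV.s → P v := by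
    intro k
    induction k with
    | zero => intro v _ hk; simp at hk; rw [hk]; exact h0
    | succ k ih =>
      intro v hv hk
      by_cases hs : v = BV.s
      · rw [hs]; exact h0
      · apply h1 v hv hs
        apply ih _ (edge_vertex (hp v hv)).2
        simpa [Function.iterate_succ_apply] using hk
  intro v hv
  obtain ⟨k, hk⟩ := hu v hv
  exact this k v hv hk

lemma bval_unique {n : ℕ} {π : BV → BV} (hp : IsBPolicy n π) (hu : BWeakUnichain n π)
    (W : BV → ℚ) (hs : W BV.s = 0)
    (hW : ∀ v, IsBVertex n v → v ≠ BV.s → W v = rB n v (π v) + W (π v)) :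
    ∀ v, IsBVertex n v → W v = BVal n π v := by
  apply path_ind hp hu
  · rw [hs, bval_s]
  · intro v hv hvs ih
    rw [hW v hv hvs, ih, bval_step hu hv hvs]

/-- The optimal values. -/
def phi (n : ℕ) : BV → ℚ
  | BV.t => 2 ^ (n + 1) - 2 + 3 / 4
  | BV.s => 0
  | BV.d => 0
  | BV.a i => 2 ^ (n + 1) - 2 ^ i + 3 / 4
  | BV.b i => 2 ^ (n + 1) - 2 ^ (i + 1) + 3 / 4

lemma two_le_pow {i : ℕ} (h : 1 ≤ i) : (2 : ℚ) ≤ 2 ^ i := by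
  calc (2 : ℚ) = 2 ^ 1 := by norm_num
    _ ≤ 2 ^ i := pow_le_pow_right₀ (by norm_num) h

lemma pow_mono {i j : ℕ} (h : i ≤ j) : (2 : ℚ) ^ i ≤ 2 ^ j := pow_le_pow_right₀ (by norm_num) h

lemma phi_edge {n : ℕ} {u v : BV} (h : BEdge n u v) : rB n u v + phi n v ≤ phi n u := by
  rcases h with ⟨i, h1, h2, rfl, rfl⟩ | ⟨i, h1, h2, rfl, rfl⟩ | ⟨i, h1, h2, rfl, rfl⟩ |
    ⟨i, h1, h2, rfl, rfl⟩ | ⟨i, h1, h2, rfl, rfl⟩ | ⟨i, h1, h2, rfl, rfl⟩ | ⟨rfl, rfl⟩ | ⟨rfl, rfl⟩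
  · have := two_le_pow h1
    simp only [rB, phi]; linarith
  · simp only [rB, phi, if_true, pow_succ]; linarith
  · have := two_le_pow h1
    have := pow_mono (show i ≤ n + 1 by omega)
    unfold aN; split_ifs
    · simp only [rB, phi]; linarith
    · simp only [rB, phi, pow_succ] at *; linarith
  · simp only [rB, phi]; linarith
  · have := two_le_pow h1
    unfold bN; split_ifs with hh
    · have : i = n := by omega
      subst this
      simp only [rB, phi, if_true]; linarith
    · simp only [rB, phi, if_true, pow_succ] at *; linarith
  · unfold aN; split_ifs with hh
    · have : i = n := by omega
      subst this
      simp only [rB, phi]; linarith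
    · simp only [rB, phi]; linarith
  · simp [rB, phi]
  · simp [rB, phi]

lemma rB_ge {n : ℕ} {u v : BV} (h : BEdge n u v) : -(2 ^ n : ℚ) ≤ rB n u v := by
  have h0 : (0 : ℚ) < 2 ^ n := by positivity
  rcases h with ⟨i, h1, h2, rfl, rfl⟩ | ⟨i, h1, h2, rfl, rfl⟩ | ⟨i, h1, h2, rfl, rfl⟩ |
    ⟨i, h1, h2, rfl, rfl⟩ | ⟨i, h1, h2, rfl, rfl⟩ | ⟨i, h1, h2, rfl, rfl⟩ | ⟨rfl, rfl⟩ | ⟨rfl, rfl⟩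
  all_goals (try unfold aN); (try unfold bN); (try split_ifs) <;> simp only [rB] <;>
    (try split_ifs) <;> (try linarith)
  · have : (0 : ℚ) < 2 ^ i := by positivity
    linarith
  · simp_all
  · have := pow_mono h2
    linarith

lemma rB_int {n : ℕ} {u v : BV} : ∃ m : ℤ, 4 * rB n u v = m := by
  unfold rB
  split
  · split_ifs
    · exact ⟨4 * 2 ^ _, by push_cast; ring⟩
    · exact ⟨0, by simp⟩
  · exact ⟨-4 * 2 ^ _ + 5, by push_cast; ring⟩
  · split_ifs
    · exact ⟨3, by norm_num⟩
    · exact ⟨0, by simp⟩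
  · split_ifs
    · exact ⟨3, by norm_num⟩
    · exact ⟨0, by simp⟩
  · exact ⟨0, by simp⟩

lemma bval_int {n : ℕ} {π : BV → BV} (h : Good n π) :
    ∀ v, IsBVertex n v → ∃ m : ℤ, 4 * BVal n π v = m := by
  apply path_ind h.pol h.uni
  · exact ⟨0, by rw [bval_s]; simp⟩
  · rintro v hv hs ⟨m, hm⟩
    obtain ⟨k, hk⟩ := @rB_int n v (π v)
    exact ⟨k + m, by rw [bval_step h.uni hv hs]; push_cast; linarith⟩

lemma bval_le {n : ℕ} {π : BV → BV} (hp : IsBPolicy n π) (hu : BWeakUnichain n π) :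
    ∀ v, IsBVertex n v → BVal n π v ≤ phi n v := by
  apply path_ind hp hu
  · rw [bval_s]; simp [phi]
  · intro v hv hs ih
    have := phi_edge (hp v hv)
    rw [bval_step hu hv hs]; linarith

lemma phi_le {n : ℕ} {v : BV} : phi n v ≤ 2 ^ (n + 1) := by
  have h0 : (2 : ℚ) ≤ 2 ^ (n + 1) := two_le_pow (by omega)
  cases v with
  | a i => have := one_le_pow₀ (n := i) (show (1 : ℚ) ≤ 2 by norm_num); simp only [phi]; linarith
  | b i => have := one_le_pow₀ (n := i + 1) (show (1 : ℚ) ≤ 2 by norm_num); simp only [phi]; linarith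
  | _ => simp only [phi]; linarith

lemma zB_abs {n : ℕ} {π : BV → BV} (h : Good n π) {u v : BV} (e : BEdge n u v) :
    |zB n π u v| ≤ 2 ^ (n + 2) := by
  have hv := edge_vertex e
  have h1 := phi_edge e
  have h2 := bval_le h.pol h.uni _ hv.1
  have h3 := bval_le h.pol h.uni _ hv.2
  have h4 := h.nonneg _ hv.1
  have h5 := h.nonneg _ hv.2
  have h6 := @phi_le n u
  have h7 := rB_ge e
  have h8 : (0 : ℚ) < 2 ^ n := by positivity
  unfold zB
  have e1 : (2 : ℚ) ^ (n + 1) = 2 * 2 ^ n := by ring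
  have e2 : (2 : ℚ) ^ (n + 2) = 4 * 2 ^ n := by ring
  rw [e2]
  rw [abs_le]; constructor <;> linarith

lemma zB_quarter {n : ℕ} {π : BV → BV} (h : Good n π) {u v : BV} (e : BEdge n u v)
    (hz : zB n π u v ≠ 0) : 1 / 4 ≤ |zB n π u v| := by
  have hv := edge_vertex e
  obtain ⟨a, ha⟩ := bval_int h _ hv.1
  obtain ⟨b, hb⟩ := bval_int h _ hv.2
  obtain ⟨c, hc⟩ := @rB_int n u v
  have : 4 * zB n π u v = ((c + b - a : ℤ) : ℚ) := by unfold zB; push_cast; linarith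
  have h0 : (c + b - a : ℤ) ≠ 0 := by
    intro h0; rw [h0] at this; apply hz; simpa using this
  have h1 : (1 : ℤ) ≤ |c + b - a| := Int.one_le_abs h0
  have h2 : |4 * zB n π u v| = ((|c + b - a| : ℤ) : ℚ) := by rw [this]; push_cast; rfl
  rw [abs_mul] at h2
  have h3 : (1 : ℚ) ≤ ((|c + b - a| : ℤ) : ℚ) := by exact_mod_cast h1
  rw [← h2] at h3
  norm_num at h3
  linarith

/-- Applying an improving switch keeps the policy good and does not decrease values. -/
lemma good_update {n : ℕ} {π : BV → BV} (h : Good n π) {v w : BV} (e : BEdge n v w)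
    (hs : v ≠ BV.s) (hz : 0 < zB n π v w) :
    Good n (Function.update π v w) ∧
    (∀ u, IsBVertex n u → BVal n π u ≤ BVal n (Function.update π v w) u) ∧
    BVal n π v + zB n π v w ≤ BVal n (Function.update π v w) v := by
  have hv := edge_vertex e
  set π' := Function.update π v w with hπ'
  have hne : ∀ u, u ≠ v → π' u = π u := fun u hu => by simp [hπ', hu]
  have hvv : π' v = w := by simp [hπ']
  have hp' : IsBPolicy n π' := by
    intro u hu
    by_cases huv : u = v
    · rw [huv, hvv]; exact e
    · rw [hne u huv]; exact h.pol u hu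
  -- along the path of `π`, `phi - V` does not increase
  have mono : ∀ i u, IsBVertex n u → π^[i] u = v →
      BVal n π u - BVal n π v ≤ phi n u - phi n v := by
    intro i
    induction i with
    | zero => intro u hu hi; simp at hi; rw [hi]; simp
    | succ i ih =>
      intro u hu hi
      by_cases hus : u = BV.s
      · exfalso
        have : ∀ j, π^[j] BV.s = BV.s := fun j =>
          Function.iterate_fixed (pol_s h.pol) j
        rw [hus, this] at hi; exact hs hi.symm
      · rw [Function.iterate_succ_apply] at hi
        have h1 := ih _ (edge_vertex (h.pol u hu)).2 hi
        have h2 := phi_edge (h.pol u hu)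
        rw [bval_step h.uni hu hus]; linarith
  have hnot : ∀ i, π^[i] w ≠ v := by
    intro i hi
    have h1 := mono i w hv.2 hi
    have h2 := phi_edge e
    unfold zB at hz; linarith
  have hw : ∃ k, π'^[k] w = BV.s := by
    obtain ⟨k, hk⟩ := h.uni w hv.2
    have : ∀ i, π'^[i] w = π^[i] w := by
      intro i
      induction i with
      | zero => rfl
      | succ i ih =>
        rw [Function.iterate_succ_apply', Function.iterate_succ_apply', ih, hne _ (hnot i)]
    exact ⟨k, by rw [this, hk]⟩
  have hu' : BWeakUnichain n π' := by
    apply path_ind h.pol h.uni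
    · exact ⟨0, rfl⟩
    · rintro u hu hus ⟨k, hk⟩
      by_cases huv : u = v
      · obtain ⟨k, hk⟩ := hw
        exact ⟨k + 1, by rw [Function.iterate_succ_apply, huv, hvv, hk]⟩
      · exact ⟨k + 1, by rw [Function.iterate_succ_apply, hne u huv, hk]⟩
  have hle : ∀ u, IsBVertex n u → BVal n π u ≤ BVal n π' u := by
    apply path_ind hp' hu'
    · simp [bval_s]
    · intro u hu hus ih
      rw [bval_step hu' hu hus]
      by_cases huv : u = v
      · subst huv
        rw [hvv] at ih ⊢
        unfold zB at hz; linarith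
      · rw [hne u huv] at ih ⊢
        rw [bval_step h.uni hu hus]; linarith
  refine ⟨⟨hp', hu', fun u hu => (h.nonneg u hu).trans (hle u hu)⟩, hle, ?_⟩
  rw [bval_step hu' hv.1 hs, hvv]
  have := hle w hv.2
  unfold zB; linarith

end LI


namespace LI

open Classical in
/-- The policy of `𝔇_n` with orientation `π` and set `S` of switched-on gadgets. -/
noncomputable def mk (π : BV → BV) (S : BV → BV → Prop) : DV → DV
  | DV.base v => if v = BV.s then DV.base BV.s else DV.x v (π v)
  | DV.x v w => if S v w then DV.y v w else DV.base v
  | DV.y v w => DV.y v w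
  | DV.z _ w => DV.base w

lemma twin_eq (π : BV → BV) : twin π = mk π (fun v w => w = π v) := by
  funext u
  cases u <;> simp [twin, mk]

def flip (S : BV → BV → Prop) (v w : BV) : BV → BV → Prop :=
  fun a b => if a = v ∧ b = w then ¬ S a b else S a b

def OK (n : ℕ) (π : BV → BV) (S : BV → BV → Prop) : Prop :=
  ∀ v, IsBVertex n v → v ≠ BV.s → S v (π v)

open Classical in
noncomputable def UV (n : ℕ) (p : BV → ℚ) (π : BV → BV) (S : BV → BV → Prop) : DV → ℚ
  | DV.base v => if IsBVertex n v then BVal n π v else 0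
  | DV.x v w => if DEdgePair n v w then
      (if S v w then p v * (rB n v w + BVal n π w) + (1 - p v) * BVal n π v else BVal n π v) else 0
  | DV.y v w => if DEdgePair n v w then
      p v * (rB n v w + BVal n π w) + (1 - p v) * BVal n π v else 0
  | DV.z v w => if DEdgePair n v w then rB n v w + BVal n π w else 0

lemma pair_pol {n : ℕ} {π : BV → BV} (hp : IsBPolicy n π) {v : BV} (hv : IsBVertex n v)
    (hs : v ≠ BV.s) : DEdgePair n v (π v) := ⟨hp v hv, hs⟩

lemma UV_isDVal {n : ℕ} {p : BV → ℚ} {π : BV → BV} {S : BV → BV → Prop}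
    (hg : Good n π) (hS : OK n π S) : IsDVal n p (mk π S) (UV n p π S) := by
  refine ⟨?_, ?_, ?_⟩
  · simp [UV, bval_s]
  · intro u hu
    cases u with
    | base v =>
      by_cases hs : v = BV.s
      · subst hs; simp [mk, rD]
      · have hv : IsBVertex n v := hu
        have hE := pair_pol hg.pol hv hs
        have h1 := hS v hv hs
        have := bval_step hg.uni hv hs
        simp only [mk, if_neg hs, rD, UV, if_pos hv, if_pos hE, if_pos h1]
        rw [← this]; ring
    | x v w =>
      have hE : DEdgePair n v w := hu
      have hv := (edge_vertex hE.1).1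
      by_cases h : S v w
      · simp [mk, rD, UV, hE, h]
      · simp [mk, rD, UV, hE, h, hv]
    | y v w => exact hu.elim
    | z v w =>
      have hE : DEdgePair n v w := hu
      have hv := (edge_vertex hE.1).2
      simp [mk, rD, UV, hE, hv]
  · intro v w hE
    have hv := (edge_vertex hE.1).1
    simp [UV, hE, hv]

lemma DVal_mk {n : ℕ} {p : BV → ℚ} {π : BV → BV} {S : BV → BV → Prop}
    (hpp : ∀ v, p v ≠ 0) (hg : Good n π) (hS : OK n π S) :
    DVal n p (mk π S) = UV n p π S := by
  have hex : IsDVal n p (mk π S) (UV n p π S) ∧ ∀ u, ¬ IsDVertex n u → UV n p π S u = 0 := by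
    refine ⟨UV_isDVal hg hS, ?_⟩
    intro u hu
    cases u <;> simp only [IsDVertex] at hu <;> simp [UV, hu]
  have huniq : ∀ W, (IsDVal n p (mk π S) W ∧ ∀ u, ¬ IsDVertex n u → W u = 0) →
      W = UV n p π S := by
    rintro W ⟨⟨h1, h2, h3⟩, h4⟩
    have hz : ∀ v w, DEdgePair n v w → W (DV.z v w) = rB n v w + W (DV.base w) := by
      intro v w hE
      have := h2 (DV.z v w) hE
      simpa [mk, rD] using this
    have hb : ∀ v, IsBVertex n v → W (DV.base v) = BVal n π v := by
      apply bval_unique hg.pol hg.uni (fun v => W (DV.base v)) h1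
      intro v hv hs
      have hE := pair_pol hg.pol hv hs
      have a1 := h2 (DV.base v) hv
      have a2 := h2 (DV.x v (π v)) hE
      have a3 := h3 v (π v) hE
      simp only [mk, if_neg hs, rD, if_pos (hS v hv hs)] at a1 a2
      rw [hz v _ hE] at a3
      have : p v * (W (DV.base v) - (rB n v (π v) + W (DV.base (π v)))) = 0 := by
        have : W (DV.base v) = p v * (rB n v (π v) + W (DV.base (π v)))
          + (1 - p v) * W (DV.base v) := by linarith
        linarith
      rcases mul_eq_zero.1 this with h | h
      · exact absurd h (hpp v)
      · show W (DV.base v) = _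
        linarith
    have hy : ∀ v w, DEdgePair n v w → W (DV.y v w) =
        p v * (rB n v w + BVal n π w) + (1 - p v) * BVal n π v := by
      intro v w hE
      rw [h3 v w hE, hz v w hE, hb _ (edge_vertex hE.1).1, hb _ (edge_vertex hE.1).2]
    funext u
    by_cases hu : IsDVertex n u
    · cases u with
      | base v => have hu' : IsBVertex n v := hu; simp [UV, hu', hb v hu']
      | y v w => have hE : DEdgePair n v w := hu; simp [UV, hE, hy v w hE]
      | z v w =>
        have hE : DEdgePair n v w := hu
        simp [UV, hE, hz v w hE, hb _ (edge_vertex hE.1).2]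
      | x v w =>
        have hE : DEdgePair n v w := hu
        have := h2 (DV.x v w) hE
        by_cases h : S v w
        · simp only [mk, if_pos h, rD] at this
          simp [UV, hE, h, this, hy v w hE]
        · simp only [mk, if_neg h, rD] at this
          simp [UV, hE, h, this, hb _ (edge_vertex hE.1).1]
    · rw [h4 u hu, hex.2 u hu]
  have hh : ∃! V : DV → ℚ, IsDVal n p (mk π S) V ∧ ∀ u, ¬ IsDVertex n u → V u = 0 :=
    ⟨_, hex, huniq⟩
  unfold DVal
  rw [dif_pos hh]
  exact huniq _ hh.exists.choose_spec

lemma upd_flip {π : BV → BV} {S : BV → BV → Prop} {v w : BV} (h : ¬ S v w) :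
    Function.update (mk π S) (DV.x v w) (DV.y v w) = mk π (flip S v w) := by
  funext u
  by_cases hu : u = DV.x v w
  · subst hu; simp [mk, flip, h]
  · rw [Function.update_of_ne hu]
    cases u with
    | x a b =>
      have : ¬ (a = v ∧ b = w) := by rintro ⟨rfl, rfl⟩; exact hu rfl
      have hf : flip S v w a b ↔ S a b := by unfold flip; rw [if_neg this]
      by_cases hs : S a b
      · simp only [mk, if_pos hs, if_pos (hf.2 hs)]
      · simp only [mk, if_neg hs, if_neg (fun h => hs (hf.1 h))]
    | _ => simp [mk]

lemma upd_flip' {π : BV → BV} {S : BV → BV → Prop} {v w : BV} (h : S v w) :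
    Function.update (mk π S) (DV.x v w) (DV.base v) = mk π (flip S v w) := by
  funext u
  by_cases hu : u = DV.x v w
  · subst hu; simp [mk, flip, h]
  · rw [Function.update_of_ne hu]
    cases u with
    | x a b =>
      have : ¬ (a = v ∧ b = w) := by rintro ⟨rfl, rfl⟩; exact hu rfl
      have hf : flip S v w a b ↔ S a b := by unfold flip; rw [if_neg this]
      by_cases hs : S a b
      · simp only [mk, if_pos hs, if_pos (hf.2 hs)]
      · simp only [mk, if_neg hs, if_neg (fun h => hs (hf.1 h))]
    | _ => simp [mk]

lemma upd_base {π : BV → BV} {S : BV → BV → Prop} {v w : BV} (hs : v ≠ BV.s) :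
    Function.update (mk π S) (DV.base v) (DV.x v w) = mk (Function.update π v w) S := by
  funext u
  by_cases hu : u = DV.base v
  · subst hu; simp [mk, hs]
  · rw [Function.update_of_ne hu]
    cases u with
    | base a =>
      have : a ≠ v := by rintro rfl; exact hu rfl
      simp [mk, this]
    | _ => simp [mk]

lemma mem_BVSet {n : ℕ} {v : BV} : v ∈ BVSet n ↔ IsBVertex n v := by
  cases v <;> simp [BVSet, IsBVertex]

lemma base_mem {n : ℕ} {v : BV} (h : IsBVertex n v) : DV.base v ∈ DAgentSet n := by
  classical
  simp [DAgentSet, mem_BVSet, h]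

lemma x_mem {n : ℕ} {v w : BV} (h : DEdgePair n v w) : DV.x v w ∈ DAgentSet n := by
  classical
  have := edge_vertex h.1
  simp [DAgentSet, mem_BVSet, h, this]

/-- Flippable gadgets. -/
def Cand (n : ℕ) (π : BV → BV) (S : BV → BV → Prop) (v w : BV) : Prop :=
  DEdgePair n v w ∧ ((¬ S v w ∧ 0 < zB n π v w) ∨ (S v w ∧ zB n π v w < 0))

lemma OK_flip {n : ℕ} {π : BV → BV} {S : BV → BV → Prop} {v w : BV} (hS : OK n π S)
    (h : ¬ S v w ∨ w ≠ π v) : OK n π (flip S v w) := by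
  intro a ha hs
  have := hS a ha hs
  unfold flip
  split_ifs with h1
  · obtain ⟨rfl, rfl⟩ := h1
    tauto
  · exact this

lemma zB_pol {n : ℕ} {π : BV → BV} (hg : Good n π) {v : BV} (hv : IsBVertex n v)
    (hs : v ≠ BV.s) : zB n π v (π v) = 0 := by
  unfold zB; rw [bval_step hg.uni hv hs]; ring

lemma cand_ok {n : ℕ} {π : BV → BV} {S : BV → BV → Prop} {v w : BV} (hg : Good n π)
    (hS : OK n π S) (h : Cand n π S v w) : OK n π (flip S v w) := by
  apply OK_flip hS
  rcases h with ⟨hE, ⟨h, -⟩ | ⟨-, h⟩⟩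
  · exact Or.inl h
  · right; rintro rfl
    rw [zB_pol hg (edge_vertex hE.1).1 hE.2] at h
    exact lt_irrefl _ h

lemma obj_flip {n : ℕ} {p : BV → ℚ} {π : BV → BV} {S : BV → BV → Prop}
    (hpp : ∀ v, p v ≠ 0) (hg : Good n π) (hS : OK n π S) {v w : BV} (h : Cand n π S v w) :
    LIobj n p (mk π (flip S v w)) = LIobj n p (mk π S) + p v * |zB n π v w| := by
  classical
  unfold LIobj
  rw [DVal_mk hpp hg hS, DVal_mk hpp hg (cand_ok hg hS h)]
  have hm := x_mem h.1
  rw [← Finset.add_sum_erase _ _ hm, ← Finset.add_sum_erase (DAgentSet n) (UV n p π S) hm]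
  have e1 : ∑ x ∈ (DAgentSet n).erase (DV.x v w), UV n p π (flip S v w) x =
      ∑ x ∈ (DAgentSet n).erase (DV.x v w), UV n p π S x := by
    apply Finset.sum_congr rfl
    intro u hu
    have hu := Finset.ne_of_mem_erase hu
    cases u with
    | x a b =>
      have : ¬ (a = v ∧ b = w) := by rintro ⟨rfl, rfl⟩; exact hu rfl
      simp [UV, flip, this]
    | _ => simp [UV]
  have hE := h.1
  have e2 : UV n p π (flip S v w) (DV.x v w) = UV n p π S (DV.x v w) + p v * |zB n π v w| := by
    rcases h.2 with ⟨h1, h2⟩ | ⟨h1, h2⟩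
    · rw [abs_of_pos h2]
      simp only [UV, flip, hE, h1, if_true, if_false, zB, and_self, not_false_eq_true]
      ring
    · rw [abs_of_neg h2]
      simp only [UV, flip, hE, h1, if_true, if_false, zB, and_self, not_true_eq_false]
      ring
  rw [e1, e2]; ring

lemma OK_upd {n : ℕ} {π : BV → BV} {S : BV → BV → Prop} {v w : BV} (hS : OK n π S)
    (h : S v w) : OK n (Function.update π v w) S := by
  intro a ha hs
  by_cases hav : a = v
  · subst hav; simpa using h
  · simpa [hav] using hS a ha hs

lemma obj_base {n : ℕ} {p : BV → ℚ} {π : BV → BV} {S : BV → BV → Prop}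
    (hp0 : ∀ v, 0 < p v) (hp1 : ∀ v, p v ≤ 1) (hg : Good n π) (hS : OK n π S) {v w : BV}
    (hE : DEdgePair n v w) (hs : S v w) (hz : 0 < zB n π v w) :
    LIobj n p (mk π S) + zB n π v w ≤ LIobj n p (mk (Function.update π v w) S) := by
  classical
  have hpp : ∀ v, p v ≠ 0 := fun v => (hp0 v).ne'
  obtain ⟨hg', hle, hv⟩ := good_update hg hE.1 hE.2 hz
  unfold LIobj
  rw [DVal_mk hpp hg hS, DVal_mk hpp hg' (OK_upd hS hs)]
  have hvv := (edge_vertex hE.1).1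
  have hm := base_mem hvv
  rw [← Finset.add_sum_erase _ _ hm,
    ← Finset.add_sum_erase (DAgentSet n) (UV n p (Function.update π v w) S) hm]
  have e1 : ∑ x ∈ (DAgentSet n).erase (DV.base v), UV n p π S x ≤
      ∑ x ∈ (DAgentSet n).erase (DV.base v), UV n p (Function.update π v w) S x := by
    apply Finset.sum_le_sum
    intro u _
    cases u with
    | base a =>
      simp only [UV]; split_ifs with h
      · exact hle a h
      · exact le_rfl
    | x a b =>
      simp only [UV]; split_ifs with h h2
      · have := edge_vertex h.1
        have h1 := hle _ this.1
        have h2 := hle _ this.2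
        have h3 := hp0 a
        have h4 := hp1 a
        have h5 : 0 ≤ 1 - p a := by linarith
        exact add_le_add (mul_le_mul_of_nonneg_left (by linarith) h3.le)
          (mul_le_mul_of_nonneg_left h1 h5)
      · exact hle _ (edge_vertex h.1).1
      · exact le_rfl
    | y a b =>
      simp only [UV]; split_ifs with h
      · have := edge_vertex h.1
        have h1 := hle _ this.1
        have h2 := hle _ this.2
        have h3 := hp0 a
        have h4 := hp1 a
        have h5 : 0 ≤ 1 - p a := by linarith
        exact add_le_add (mul_le_mul_of_nonneg_left (by linarith) h3.le)
          (mul_le_mul_of_nonneg_left h1 h5)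
      · exact le_rfl
    | z a b =>
      simp only [UV]; split_ifs with h
      · have := hle _ (edge_vertex h.1).2
        linarith
      · exact le_rfl
  have e2 : UV n p π S (DV.base v) + zB n π v w ≤
      UV n p (Function.update π v w) S (DV.base v) := by
    simp only [UV, if_pos hvv]; exact hv
  linarith

/-- Classification of improving switches. -/
lemma improving_cases {n : ℕ} {p : BV → ℚ} {π : BV → BV} {S : BV → BV → Prop}
    (hp0 : ∀ v, 0 < p v) (hg : Good n π) (hS : OK n π S) {u u' : DV}
    (h : DImproving n p (mk π S) u u') :
    (∃ v w, Cand n π S v w ∧ Function.update (mk π S) u u' = mk π (flip S v w)) ∨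
    (∃ v w, DEdgePair n v w ∧ S v w ∧ 0 < zB n π v w ∧
      Function.update (mk π S) u u' = mk (Function.update π v w) S) := by
  have hpp : ∀ v, p v ≠ 0 := fun v => (hp0 v).ne'
  obtain ⟨hD, hz⟩ := h
  unfold zD at hz
  rw [DVal_mk hpp hg hS] at hz
  rcases hD with ⟨v, w, hE, ⟨rfl, rfl⟩ | ⟨rfl, rfl⟩ | ⟨rfl, rfl⟩ | ⟨rfl, rfl⟩⟩ | ⟨rfl, rfl⟩
  · have hv := (edge_vertex hE.1).1
    right
    by_cases hs : S v w
    · simp only [rD, UV, hE, hv, hs, if_true] at hz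
      have : 0 < p v * zB n π v w := by unfold zB; linarith
      exact ⟨v, w, hE, hs, (mul_pos_iff_of_pos_left (hp0 v)).1 this, upd_base hE.2⟩
    · simp [rD, UV, hE, hv, hs] at hz
  · have hv := (edge_vertex hE.1).1
    left
    by_cases hs : S v w
    · simp only [rD, UV, hE, hv, hs, if_true] at hz
      have : 0 < p v * (- zB n π v w) := by unfold zB; linarith
      have := (mul_pos_iff_of_pos_left (hp0 v)).1 this
      exact ⟨v, w, ⟨hE, Or.inr ⟨hs, by linarith⟩⟩, upd_flip' hs⟩
    · simp [rD, UV, hE, hv, hs] at hz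
  · left
    by_cases hs : S v w
    · simp [rD, UV, hE, hs] at hz
    · simp only [rD, UV, hE, hs, if_true, if_false] at hz
      have : 0 < p v * zB n π v w := by unfold zB; linarith
      exact ⟨v, w, ⟨hE, Or.inl ⟨hs, (mul_pos_iff_of_pos_left (hp0 v)).1 this⟩⟩, upd_flip hs⟩
  · have hv := (edge_vertex hE.1).2
    simp [rD, UV, hE, hv] at hz
  · simp [rD] at hz

lemma improving_cand {n : ℕ} {p : BV → ℚ} {π : BV → BV} {S : BV → BV → Prop}
    (hp0 : ∀ v, 0 < p v) (hg : Good n π) (hS : OK n π S) {v w : BV} (h : Cand n π S v w) :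
    ∃ u u', DImproving n p (mk π S) u u' ∧
      Function.update (mk π S) u u' = mk π (flip S v w) := by
  have hpp : ∀ v, p v ≠ 0 := fun v => (hp0 v).ne'
  have hE := h.1
  have hv := (edge_vertex hE.1).1
  rcases h.2 with ⟨h1, h2⟩ | ⟨h1, h2⟩
  · refine ⟨DV.x v w, DV.y v w, ⟨Or.inl ⟨v, w, hE, by simp⟩, ?_⟩, upd_flip h1⟩
    unfold zD; rw [DVal_mk hpp hg hS]
    simp only [rD, UV, hE, h1, if_true, if_false]
    have := mul_pos (hp0 v) h2
    unfold zB at this; linarith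
  · refine ⟨DV.x v w, DV.base v, ⟨Or.inl ⟨v, w, hE, by simp⟩, ?_⟩, upd_flip' h1⟩
    unfold zD; rw [DVal_mk hpp hg hS]
    simp only [rD, UV, hE, h1, hv, if_true]
    have := mul_pos (hp0 v) (neg_pos.2 h2)
    unfold zB at this; linarith

lemma improving_base {n : ℕ} {p : BV → ℚ} {π : BV → BV} {S : BV → BV → Prop}
    (hp0 : ∀ v, 0 < p v) (hg : Good n π) (hS : OK n π S) {v w : BV} (hE : DEdgePair n v w)
    (hs : S v w) (hz : 0 < zB n π v w) :
    ∃ u u', DImproving n p (mk π S) u u' ∧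
      Function.update (mk π S) u u' = mk (Function.update π v w) S := by
  have hpp : ∀ v, p v ≠ 0 := fun v => (hp0 v).ne'
  have hv := (edge_vertex hE.1).1
  refine ⟨DV.base v, DV.x v w, ⟨Or.inl ⟨v, w, hE, by simp⟩, ?_⟩, upd_base hE.2⟩
  unfold zD; rw [DVal_mk hpp hg hS]
  simp only [rD, UV, hE, hs, hv, if_true]
  have := mul_pos (hp0 v) hz
  unfold zB at this; linarith

/-! probabilities -/

lemma p_pos (n : ℕ) (v : BV) : 0 < pSpec n v := by unfold pSpec; positivity

lemma p_inv (n : ℕ) (v : BV) : pSpec n v * 2 ^ (NV n v * (n + 5)) = 1 := by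
  unfold pSpec
  rw [zpow_neg, zpow_natCast]
  exact inv_mul_cancel₀ (by positivity)

lemma p_le_one (n : ℕ) (v : BV) : pSpec n v ≤ 1 := by
  have h1 := p_inv n v
  have h2 := p_pos n v
  have h3 : (1 : ℚ) ≤ 2 ^ (NV n v * (n + 5)) := one_le_pow₀ (by norm_num)
  nlinarith

lemma NV_pos {n : ℕ} {v : BV} (h : IsBVertex n v) : 1 ≤ NV n v := by
  cases v <;> simp [NV, IsBVertex] at * <;> omega

lemma p_small {n : ℕ} {v : BV} (h : IsBVertex n v) : pSpec n v * 2 ^ (n + 2) ≤ 1 / 8 := by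
  have h1 := p_inv n v
  have h2 := p_pos n v
  have h3 : (2 : ℚ) ^ (n + 2 + 3) ≤ 2 ^ (NV n v * (n + 5)) := by
    apply pow_mono
    have := NV_pos h
    nlinarith
  rw [pow_add] at h3
  nlinarith

lemma p_lt {n : ℕ} {u v : BV} (h : NV n u < NV n v) :
    pSpec n v * 2 ^ (n + 2) ≤ pSpec n u * (1 / 8) := by
  have h1 := p_inv n u
  have h2 := p_pos n u
  have h1' := p_inv n v
  have h2' := p_pos n v
  have h3 : (2 : ℚ) ^ (n + 2 + 3 + NV n u * (n + 5)) ≤ 2 ^ (NV n v * (n + 5)) := by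
    apply pow_mono
    nlinarith
  rw [pow_add, pow_add] at h3
  have h4 : pSpec n v * (2 ^ (n + 2) * 2 ^ 3 * 2 ^ (NV n u * (n + 5))) ≤ 1 := by
    rw [← h1']; gcongr
  have h5 : pSpec n v * (2 ^ (n + 2) * 2 ^ 3) * (pSpec n u * 2 ^ (NV n u * (n + 5)))
      ≤ 1 * pSpec n u := by
    have := mul_le_mul_of_nonneg_right h4 h2.le
    linarith
  rw [h1] at h5
  linarith

lemma NV_inj {n : ℕ} {u v : BV} (hu : IsBVertex n u) (hv : IsBVertex n v)
    (h : NV n u = NV n v) : u = v := by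
  cases u <;> cases v <;> simp [NV, IsBVertex] at * <;> omega

lemma force13 {n : ℕ} {π : BV → BV} {S : BV → BV → Prop} (hg : Good n π) (hS : OK n π S)
    (h2 : ∀ v w, DEdgePair n v w → S v w → zB n π v w ≤ 0) {v w : BV}
    (hc : Cand n π S v w)
    (ho : ∀ v' w', Cand n π S v' w' → (v' = v ∧ w' = w) ∨ NV n v < NV n v' ∨
      (v' = v ∧ |zB n π v w'| < |zB n π v w|)) {f' : DV → DV}
    (hst : LIStep n (pSpec n) (mk π S) f') : f' = mk π (flip S v w) := by
  obtain ⟨u, u', hi, hmax, rfl⟩ := hst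
  have hpp : ∀ v, pSpec n v ≠ 0 := fun v => (p_pos n v).ne'
  obtain ⟨a, a', ha, hae⟩ := improving_cand (p_pos n) hg hS hc
  have hm := hmax a a' ha
  rw [hae, obj_flip hpp hg hS hc] at hm
  rcases improving_cases (p_pos n) hg hS hi with ⟨v', w', hc', he⟩ | ⟨v', w', hE, hs, hz, he⟩
  · rw [he] at hm ⊢
    rw [obj_flip hpp hg hS hc'] at hm
    have hm : pSpec n v * |zB n π v w| ≤ pSpec n v' * |zB n π v' w'| := by linarith
    rcases ho v' w' hc' with ⟨rfl, rfl⟩ | h | ⟨rfl, h⟩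
    · rfl
    · exfalso
      have e1 : 1 / 4 ≤ |zB n π v w| := by
        apply zB_quarter hg hc.1.1
        rcases hc.2 with ⟨_, h⟩ | ⟨_, h⟩
        · exact h.ne'
        · exact h.ne
      have e2 := zB_abs hg hc'.1.1
      have e3 := p_lt (n := n) h
      have e4 := mul_le_mul_of_nonneg_left e1 (p_pos n v).le
      have e5 := mul_le_mul_of_nonneg_left e2 (p_pos n v').le
      have := p_pos n v
      linarith
    · exfalso
      have := mul_lt_mul_of_pos_left h (p_pos n v')
      linarith
  · exact absurd hz (not_lt.2 (h2 v' w' hE hs))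

lemma force2 {n : ℕ} {π : BV → BV} {S : BV → BV → Prop} (hg : Good n π) (hS : OK n π S)
    {v w : BV} (hE : DEdgePair n v w) (hs : S v w) (hz : 0 < zB n π v w)
    (ho : ∀ v' w', DEdgePair n v' w' → S v' w' → 0 < zB n π v' w' → v' = v ∧ w' = w)
    {f' : DV → DV}
    (hst : LIStep n (pSpec n) (mk π S) f') : f' = mk (Function.update π v w) S := by
  obtain ⟨u, u', hi, hmax, rfl⟩ := hst
  have hpp : ∀ v, pSpec n v ≠ 0 := fun v => (p_pos n v).ne'
  obtain ⟨a, a', ha, hae⟩ := improving_base (p_pos n) hg hS hE hs hz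
  have hm := hmax a a' ha
  rw [hae] at hm
  have hb := obj_base (p_pos n) (p_le_one n) hg hS hE hs hz
  rcases improving_cases (p_pos n) hg hS hi with ⟨v', w', hc', he⟩ | ⟨v', w', hE', hs', hz', he⟩
  · exfalso
    rw [he, obj_flip hpp hg hS hc'] at hm
    have e1 := zB_quarter hg hE.1 hz.ne'
    rw [abs_of_pos hz] at e1
    have e2 := zB_abs hg hc'.1.1
    have e3 := p_small (edge_vertex hc'.1.1).1
    have e5 := mul_le_mul_of_nonneg_left e2 (p_pos n v').le
    linarith
  · obtain ⟨rfl, rfl⟩ := ho v' w' hE' hs' hz'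
    exact he

/-! Lower bounds on the number of steps -/

def Lead (n c : ℕ) (f : DV → DV) : Prop :=
  ∀ (g : ℕ → DV → DV) (m : ℕ), g 0 = f → (∀ k < m, LIStep n (pSpec n) (g k) (g (k + 1))) →
    (∀ u u', ¬ DImproving n (pSpec n) (g m) u u') → c ≤ m

lemma lead_mono {n c c' : ℕ} {f : DV → DV} (h : Lead n c f) (hc : c' ≤ c) : Lead n c' f :=
  fun g m h0 h1 h2 => hc.trans (h g m h0 h1 h2)

lemma lead_step {n c : ℕ} {f : DV → DV} (h0 : ∃ u u', DImproving n (pSpec n) f u u')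
    (h : ∀ f', LIStep n (pSpec n) f f' → Lead n c f') : Lead n (c + 1) f := by
  intro g m hg hst hterm
  cases m with
  | zero =>
    obtain ⟨u, u', hu⟩ := h0
    exact absurd (hg ▸ hu) (hterm u u')
  | succ m =>
    have h1 := hst 0 (by omega)
    rw [hg] at h1
    have := h (g 1) h1 (fun k => g (k + 1)) m rfl (fun k hk => hst (k + 1) (by omega)) hterm
    omega

def LX (n c : ℕ) (π : BV → BV) (XX : BV → BV → Prop) : Prop :=
  ∀ S, OK n π S → (∀ v w, DEdgePair n v w → S v w → w = π v ∨ XX v w) → Lead n c (mk π S)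

lemma LX_mono {n c c' : ℕ} {π : BV → BV} {XX XX' : BV → BV → Prop} (h : LX n c π XX)
    (hc : c' ≤ c) (hX : ∀ v w, DEdgePair n v w → XX' v w → XX v w) : LX n c' π XX' :=
  fun S h1 h2 => lead_mono (h S h1 (fun v w hE hs => (h2 v w hE hs).imp id (hX v w hE))) hc

def addp (XX : BV → BV → Prop) (v w : BV) : BV → BV → Prop :=
  fun a b => XX a b ∨ (a = v ∧ b = w)

lemma macro_sw {n c : ℕ} {π : BV → BV} {XX : BV → BV → Prop} (hg : Good n π) {v w : BV}
    (hE : DEdgePair n v w)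
    (hX : ∀ v' w', DEdgePair n v' w' → XX v' w' → zB n π v' w' ≤ 0)
    (hN : ∀ v' w', DEdgePair n v' w' → XX v' w' → NV n v < NV n v')
    (hlow : ∀ v' w', DEdgePair n v' w' → NV n v' < NV n v → zB n π v' w' ≤ 0)
    (hz : 0 < zB n π v w)
    (hrow : ∀ w', DEdgePair n v w' → w' ≠ w → zB n π v w' < zB n π v w)
    (hnext : Good n (Function.update π v w) →
      LX n c (Function.update π v w) (addp XX v (π v))) : LX n (c + 2) π XX := by
  intro S hS hSX
  have hSz : ∀ v' w', DEdgePair n v' w' → S v' w' → zB n π v' w' ≤ 0 := by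
    intro v' w' hE' hs
    rcases hSX v' w' hE' hs with rfl | h
    · rw [zB_pol hg (edge_vertex hE'.1).1 hE'.2]
    · exact hX v' w' hE' h
  have hns : ¬ S v w := fun hs => absurd hz (not_lt.2 (hSz v w hE hs))
  have hc : Cand n π S v w := ⟨hE, Or.inl ⟨hns, hz⟩⟩
  have hS1 := cand_ok hg hS hc
  apply lead_step (c := c + 1)
  · obtain ⟨u, u', h, -⟩ := improving_cand (p_pos n) hg hS hc
    exact ⟨u, u', h⟩
  intro f' hf'
  have := force13 hg hS hSz hc ?_ hf'
  · subst this
    have hsv : flip S v w v w := by simp [flip, hns]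
    apply lead_step (c := c)
    · obtain ⟨u, u', h, -⟩ := improving_base (p_pos n) hg hS1 hE hsv hz
      exact ⟨u, u', h⟩
    intro f'' hf''
    have := force2 hg hS1 hE hsv hz ?_ hf''
    · subst this
      apply hnext (good_update hg hE.1 hE.2 hz).1
      · exact OK_upd hS1 hsv
      · intro a b hab hs
        by_cases hav : a = v
        · subst hav
          by_cases hbw : b = w
          · left; simp [hbw]
          · have hs' : S a b := by simpa [flip, hbw] using hs
            right
            rcases hSX a b hab hs' with rfl | h
            · right; exact ⟨rfl, rfl⟩
            · left; exact h
        · have hs' : S a b := by simpa [flip, hav] using hs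
          rcases hSX a b hab hs' with rfl | h
          · left; simp [hav]
          · right; left; exact h
    · intro a b hab hs hzab
      by_contra hne
      have hs' : S a b := by simpa [flip, hne] using hs
      exact absurd hzab (not_lt.2 (hSz a b hab hs'))
  · rintro a b ⟨hab, ⟨h1, h2⟩ | ⟨h1, h2⟩⟩
    · by_cases hl : NV n a < NV n v
      · exact absurd h2 (not_lt.2 (hlow a b hab hl))
      · rcases Nat.lt_or_ge (NV n v) (NV n a) with h | h
        · exact Or.inr (Or.inl h)
        · have hav : a = v := NV_inj (edge_vertex hab.1).1 (edge_vertex hE.1).1 (by omega)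
          subst hav
          by_cases hbw : b = w
          · exact Or.inl ⟨rfl, hbw⟩
          · right; right
            refine ⟨rfl, ?_⟩
            rw [abs_of_pos h2, abs_of_pos hz]
            exact hrow b hab hbw
    · right; left
      rcases hSX a b hab h1 with rfl | h
      · rw [zB_pol hg (edge_vertex hab.1).1 hab.2] at h2
        exact absurd h2 (lt_irrefl _)
      · exact hN a b hab h

lemma clean_sw {n c : ℕ} {π : BV → BV} {XX : BV → BV → Prop} (hg : Good n π) {v w : BV}
    (hE : DEdgePair n v w)
    (hX : ∀ v' w', DEdgePair n v' w' → XX v' w' → zB n π v' w' ≤ 0)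
    (hN : ∀ v' w', DEdgePair n v' w' → XX v' w' → NV n v < NV n v')
    (hlow : ∀ v' w', DEdgePair n v' w' → NV n v' ≤ NV n v → zB n π v' w' ≤ 0)
    (hz : zB n π v w < 0)
    (hnext : LX n c π XX) : LX n c π (addp XX v w) := by
  intro S hS hSX
  by_cases hs : S v w
  swap
  · apply hnext S hS
    intro a b hab h
    rcases hSX a b hab h with h1 | h1 | ⟨rfl, rfl⟩
    · exact Or.inl h1
    · exact Or.inr h1
    · exact absurd h hs
  have hc : Cand n π S v w := ⟨hE, Or.inr ⟨hs, hz⟩⟩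
  have hSz : ∀ v' w', DEdgePair n v' w' → S v' w' → zB n π v' w' ≤ 0 := by
    intro v' w' hE' hs
    rcases hSX v' w' hE' hs with rfl | h | ⟨rfl, rfl⟩
    · rw [zB_pol hg (edge_vertex hE'.1).1 hE'.2]
    · exact hX v' w' hE' h
    · exact hz.le
  apply lead_mono (c := c + 1) _ (by omega)
  apply lead_step
  · obtain ⟨u, u', h, -⟩ := improving_cand (p_pos n) hg hS hc
    exact ⟨u, u', h⟩
  intro f' hf'
  have := force13 hg hS hSz hc ?_ hf'
  · subst this
    apply hnext _ (cand_ok hg hS hc)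
    intro a b hab h
    by_cases hav : a = v ∧ b = w
    · obtain ⟨rfl, rfl⟩ := hav
      simp [flip, hs] at h
    · have h' : S a b := by simpa [flip, hav] using h
      rcases hSX a b hab h' with h1 | h1 | h1
      · exact Or.inl h1
      · exact Or.inr h1
      · exact absurd h1 hav
  · rintro a b ⟨hab, ⟨h1, h2⟩ | ⟨h1, h2⟩⟩
    · right; left
      by_contra hl
      exact absurd h2 (not_lt.2 (hlow a b hab (by omega)))
    · rcases hSX a b hab h1 with rfl | h | h
      · rw [zB_pol hg (edge_vertex hab.1).1 hab.2] at h2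
        exact absurd h2 (lt_irrefl _)
      · exact Or.inr (Or.inl (hN a b hab h))
      · exact Or.inl h

end LI


namespace LI

noncomputable def Av (n : ℕ) (π : BV → BV) (i : ℕ) : ℚ := BVal n π (aN n i)
noncomputable def Bv (n : ℕ) (π : BV → BV) (i : ℕ) : ℚ := BVal n π (bN n i)
noncomputable def Tv (n : ℕ) (π : BV → BV) : ℚ := BVal n π BV.t

lemma aN_le {n i : ℕ} (h : i ≤ n) : aN n i = BV.a i := by
  unfold aN; rw [if_neg (by omega)]

lemma bN_le {n i : ℕ} (h : i ≤ n) : bN n i = BV.b i := by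
  unfold bN; rw [if_neg (by omega)]

lemma aN_ne_b {n i j : ℕ} : aN n i ≠ BV.b j := by unfold aN; split_ifs <;> simp
lemma aN_ne_t {n i : ℕ} : aN n i ≠ BV.t := by unfold aN; split_ifs <;> simp
lemma aN_ne_bN {n i j : ℕ} : aN n i ≠ bN n j := by
  unfold aN bN; split_ifs <;> simp
lemma aN_ne_self {n i : ℕ} : aN n (i + 1) ≠ BV.a i := by unfold aN; split_ifs <;> simp

lemma rB_bb {n i : ℕ} : rB n (BV.b i) (bN n (i + 1)) = 3 / 4 := by
  unfold bN; split_ifs with h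
  · have : i = n := by omega
    simp [rB, this]
  · simp [rB]

lemma rB_ba {n i : ℕ} : rB n (BV.b i) (aN n (i + 1)) = 0 := by
  unfold aN; split_ifs <;> simp [rB]

lemma rB_aa {n i : ℕ} : rB n (BV.a i) (aN n (i + 1)) = 0 := by
  unfold aN; split_ifs <;> simp [rB]

section
variable {n : ℕ} {π : BV → BV}

lemma zt {i : ℕ} (h : i ≤ n) : zB n π BV.t (BV.a i) = Av n π i - Tv n π := by
  simp [zB, rB, Av, Tv, aN_le h]

lemma zab {i : ℕ} (h : i ≤ n) :
    zB n π (BV.a i) (BV.b i) = 2 ^ i + Bv n π i - Av n π i := by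
  simp [zB, rB, Av, Bv, aN_le h, bN_le h]

lemma zaa {i : ℕ} (h : i ≤ n) :
    zB n π (BV.a i) (aN n (i + 1)) = Av n π (i + 1) - Av n π i := by
  simp [zB, rB_aa, Av, aN_le h]

lemma zat {i : ℕ} (h : i ≤ n) :
    zB n π (BV.a i) BV.t = Tv n π - 2 ^ i + 5 / 4 - Av n π i := by
  simp [zB, rB, Av, Tv, aN_le h]; ring

lemma zbb {i : ℕ} (h : i ≤ n) :
    zB n π (BV.b i) (bN n (i + 1)) = Bv n π (i + 1) + 3 / 4 - Bv n π i := by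
  simp [zB, rB_bb, Bv, bN_le h]; ring

lemma zba {i : ℕ} (h : i ≤ n) :
    zB n π (BV.b i) (aN n (i + 1)) = Av n π (i + 1) - Bv n π i := by
  simp [zB, rB_ba, Av, Bv, bN_le h]

lemma Av_end : Av n π (n + 1) = 0 := by simp [Av, aN, bval_s]

lemma pol_d (hg : Good n π) : π BV.d = BV.s := by
  have := hg.pol BV.d trivial
  simpa [BEdge] using this

lemma bval_d (hg : Good n π) : BVal n π BV.d = 0 := by
  rw [bval_step hg.uni (v := BV.d) trivial (by simp), pol_d hg, bval_s]
  simp [rB]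

lemma Bv_end (hg : Good n π) : Bv n π (n + 1) = 0 := by
  simp [Bv, bN, bval_d hg]

lemma vt (hg : Good n π) {i : ℕ} (h2 : i ≤ n) (h : π BV.t = BV.a i) : Tv n π = Av n π i := by
  have := zB_pol hg (v := BV.t) trivial (by simp)
  rw [h, zt h2] at this; linarith

lemma vab (hg : Good n π) {i : ℕ} (h1 : 1 ≤ i) (h2 : i ≤ n) (h : π (BV.a i) = BV.b i) :
    Av n π i = 2 ^ i + Bv n π i := by
  have := zB_pol hg (v := BV.a i) ⟨h1, h2⟩ (by simp)
  rw [h, zab h2] at this; linarith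

lemma vaa (hg : Good n π) {i : ℕ} (h1 : 1 ≤ i) (h2 : i ≤ n) (h : π (BV.a i) = aN n (i + 1)) :
    Av n π i = Av n π (i + 1) := by
  have := zB_pol hg (v := BV.a i) ⟨h1, h2⟩ (by simp)
  rw [h, zaa h2] at this; linarith

lemma vat (hg : Good n π) {i : ℕ} (h1 : 1 ≤ i) (h2 : i ≤ n) (h : π (BV.a i) = BV.t) :
    Av n π i = Tv n π - 2 ^ i + 5 / 4 := by
  have := zB_pol hg (v := BV.a i) ⟨h1, h2⟩ (by simp)
  rw [h, zat h2] at this; linarith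

lemma vbb (hg : Good n π) {i : ℕ} (h1 : 1 ≤ i) (h2 : i ≤ n) (h : π (BV.b i) = bN n (i + 1)) :
    Bv n π i = Bv n π (i + 1) + 3 / 4 := by
  have := zB_pol hg (v := BV.b i) ⟨h1, h2⟩ (by simp)
  rw [h, zbb h2] at this; linarith

lemma vba (hg : Good n π) {i : ℕ} (h1 : 1 ≤ i) (h2 : i ≤ n) (h : π (BV.b i) = aN n (i + 1)) :
    Bv n π i = Av n π (i + 1) := by
  have := zB_pol hg (v := BV.b i) ⟨h1, h2⟩ (by simp)
  rw [h, zba h2] at this; linarith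

end

/-! No improving switches at a vertex -/
def NIt (n : ℕ) (π : BV → BV) : Prop := ∀ j, 1 ≤ j → j ≤ n → Av n π j ≤ Tv n π
def NIa (n : ℕ) (π : BV → BV) (i : ℕ) : Prop :=
  2 ^ i + Bv n π i ≤ Av n π i ∧ Av n π (i + 1) ≤ Av n π i ∧ Tv n π - 2 ^ i + 5 / 4 ≤ Av n π i
def NIb (n : ℕ) (π : BV → BV) (i : ℕ) : Prop :=
  Bv n π (i + 1) + 3 / 4 ≤ Bv n π i ∧ Av n π (i + 1) ≤ Bv n π i

/-- Nothing improves at vertices with number below `N`. -/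
def Low (n : ℕ) (π : BV → BV) (N : ℕ) : Prop :=
  ∀ v w, DEdgePair n v w → NV n v < N → zB n π v w ≤ 0

def XOK (n : ℕ) (π : BV → BV) (N : ℕ) (XX : BV → BV → Prop) : Prop :=
  ∀ v w, DEdgePair n v w → XX v w → zB n π v w ≤ 0 ∧ N < NV n v

def NIlt (n : ℕ) (π : BV → BV) (i : ℕ) : Prop :=
  NIt n π ∧ ∀ j, 1 ≤ j → j < i → NIa n π j ∧ NIb n π j

lemma low_a {n : ℕ} {π : BV → BV} {i : ℕ} (hi : i ≤ n) (h : NIlt n π i) : Low n π (2 * i) := by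
  obtain ⟨ht, h⟩ := h
  rintro v w ⟨hE, hs⟩ hN
  rcases hE with ⟨j, h1, h2, rfl, rfl⟩ | ⟨j, h1, h2, rfl, rfl⟩ | ⟨j, h1, h2, rfl, rfl⟩ |
    ⟨j, h1, h2, rfl, rfl⟩ | ⟨j, h1, h2, rfl, rfl⟩ | ⟨j, h1, h2, rfl, rfl⟩ | ⟨rfl, rfl⟩ | ⟨rfl, rfl⟩
  · rw [zt h2]; linarith [ht j h1 h2]
  · have := (h j h1 (by simp only [NV] at hN; omega)).1.1
    rw [zab h2]; linarith
  · have := (h j h1 (by simp only [NV] at hN; omega)).1.2.1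
    rw [zaa h2]; linarith
  · have := (h j h1 (by simp only [NV] at hN; omega)).1.2.2
    rw [zat h2]; linarith
  · have := (h j h1 (by simp only [NV] at hN; omega)).2.1
    rw [zbb h2]; linarith
  · have := (h j h1 (by simp only [NV] at hN; omega)).2.2
    rw [zba h2]; linarith
  · simp only [NV] at hN; omega
  · exact absurd rfl hs

lemma low_b {n : ℕ} {π : BV → BV} {i : ℕ} (hi : i ≤ n) (h : NIlt n π i) (ha : NIa n π i) :
    Low n π (2 * i + 1) := by
  have hl := low_a hi h
  rintro v w ⟨hE, hs⟩ hN
  by_cases hN' : NV n v < 2 * i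
  · exact hl v w ⟨hE, hs⟩ hN'
  rcases hE with ⟨j, h1, h2, rfl, rfl⟩ | ⟨j, h1, h2, rfl, rfl⟩ | ⟨j, h1, h2, rfl, rfl⟩ |
    ⟨j, h1, h2, rfl, rfl⟩ | ⟨j, h1, h2, rfl, rfl⟩ | ⟨j, h1, h2, rfl, rfl⟩ | ⟨rfl, rfl⟩ | ⟨rfl, rfl⟩
  · rw [zt h2]; linarith [h.1 j h1 h2]
  · simp only [NV] at hN hN'
    obtain rfl : j = i := by omega
    rw [zab h2]; linarith [ha.1]
  · simp only [NV] at hN hN'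
    obtain rfl : j = i := by omega
    rw [zaa h2]; linarith [ha.2.1]
  · simp only [NV] at hN hN'
    obtain rfl : j = i := by omega
    rw [zat h2]; linarith [ha.2.2]
  · simp only [NV] at hN hN'; omega
  · simp only [NV] at hN hN'; omega
  · simp only [NV] at hN; omega
  · exact absurd rfl hs

lemma low_bb {n : ℕ} {π : BV → BV} {i : ℕ} (hi : i ≤ n) (h : NIlt n π i) (ha : NIa n π i)
    (hb : NIb n π i) : Low n π (2 * i + 2) := by
  have hl := low_b hi h ha
  rintro v w ⟨hE, hs⟩ hN
  by_cases hN' : NV n v < 2 * i + 1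
  · exact hl v w ⟨hE, hs⟩ hN'
  rcases hE with ⟨j, h1, h2, rfl, rfl⟩ | ⟨j, h1, h2, rfl, rfl⟩ | ⟨j, h1, h2, rfl, rfl⟩ |
    ⟨j, h1, h2, rfl, rfl⟩ | ⟨j, h1, h2, rfl, rfl⟩ | ⟨j, h1, h2, rfl, rfl⟩ | ⟨rfl, rfl⟩ | ⟨rfl, rfl⟩
  · rw [zt h2]; linarith [h.1 j h1 h2]
  · simp only [NV] at hN hN'; omega
  · simp only [NV] at hN hN'; omega
  · simp only [NV] at hN hN'; omega
  · simp only [NV] at hN hN'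
    obtain rfl : j = i := by omega
    rw [zbb h2]; linarith [hb.1]
  · simp only [NV] at hN hN'
    obtain rfl : j = i := by omega
    rw [zba h2]; linarith [hb.2]
  · simp only [NV] at hN; omega
  · exact absurd rfl hs

lemma low_t {n : ℕ} {π : BV → BV} (ht : NIt n π) : Low n π 2 := by
  rintro v w ⟨hE, hs⟩ hN
  rcases hE with ⟨j, h1, h2, rfl, rfl⟩ | ⟨j, h1, h2, rfl, rfl⟩ | ⟨j, h1, h2, rfl, rfl⟩ |
    ⟨j, h1, h2, rfl, rfl⟩ | ⟨j, h1, h2, rfl, rfl⟩ | ⟨j, h1, h2, rfl, rfl⟩ | ⟨rfl, rfl⟩ | ⟨rfl, rfl⟩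
  · rw [zt h2]; linarith [ht j h1 h2]
  all_goals simp only [NV] at hN; omega

/-! Edges -/
lemma Et {n i : ℕ} (h1 : 1 ≤ i) (h2 : i ≤ n) : DEdgePair n BV.t (BV.a i) :=
  ⟨Or.inl ⟨i, h1, h2, rfl, rfl⟩, by simp⟩
lemma Eab {n i : ℕ} (h1 : 1 ≤ i) (h2 : i ≤ n) : DEdgePair n (BV.a i) (BV.b i) :=
  ⟨Or.inr (Or.inl ⟨i, h1, h2, rfl, rfl⟩), by simp⟩
lemma Eaa {n i : ℕ} (h1 : 1 ≤ i) (h2 : i ≤ n) : DEdgePair n (BV.a i) (aN n (i + 1)) :=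
  ⟨Or.inr (Or.inr (Or.inl ⟨i, h1, h2, rfl, rfl⟩)), by simp⟩
lemma Eat {n i : ℕ} (h1 : 1 ≤ i) (h2 : i ≤ n) : DEdgePair n (BV.a i) BV.t :=
  ⟨Or.inr (Or.inr (Or.inr (Or.inl ⟨i, h1, h2, rfl, rfl⟩))), by simp⟩
lemma Ebb {n i : ℕ} (h1 : 1 ≤ i) (h2 : i ≤ n) : DEdgePair n (BV.b i) (bN n (i + 1)) :=
  ⟨Or.inr (Or.inr (Or.inr (Or.inr (Or.inl ⟨i, h1, h2, rfl, rfl⟩)))), by simp⟩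
lemma Eba {n i : ℕ} (h1 : 1 ≤ i) (h2 : i ≤ n) : DEdgePair n (BV.b i) (aN n (i + 1)) :=
  ⟨Or.inr (Or.inr (Or.inr (Or.inr (Or.inr (Or.inl ⟨i, h1, h2, rfl, rfl⟩))))), by simp⟩

lemma rows_t {n : ℕ} {w : BV} (h : DEdgePair n BV.t w) : ∃ i, 1 ≤ i ∧ i ≤ n ∧ w = BV.a i := by
  obtain ⟨hE, hs⟩ := h
  simpa [BEdge] using hE

lemma rows_a {n i : ℕ} {w : BV} (h : DEdgePair n (BV.a i) w) :
    (1 ≤ i ∧ i ≤ n) ∧ (w = BV.b i ∨ w = aN n (i + 1) ∨ w = BV.t) := by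
  obtain ⟨hE, hs⟩ := h
  have := (edge_vertex hE).1
  refine ⟨this, ?_⟩
  simp only [BEdge] at hE
  rcases hE with ⟨j, h1, h2, h, rfl⟩ | ⟨j, h1, h2, h, rfl⟩ | ⟨j, h1, h2, h, rfl⟩ |
    ⟨j, h1, h2, h, rfl⟩ | ⟨j, h1, h2, h, rfl⟩ | ⟨j, h1, h2, h, rfl⟩ | ⟨h, rfl⟩ | ⟨h, rfl⟩ <;>
    simp at h
  all_goals subst h
  · exact Or.inl rfl
  · exact Or.inr (Or.inl rfl)
  · exact Or.inr (Or.inr rfl)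

lemma rows_b {n i : ℕ} {w : BV} (h : DEdgePair n (BV.b i) w) :
    (1 ≤ i ∧ i ≤ n) ∧ (w = bN n (i + 1) ∨ w = aN n (i + 1)) := by
  obtain ⟨hE, hs⟩ := h
  have := (edge_vertex hE).1
  refine ⟨this, ?_⟩
  simp only [BEdge] at hE
  rcases hE with ⟨j, h1, h2, h, rfl⟩ | ⟨j, h1, h2, h, rfl⟩ | ⟨j, h1, h2, h, rfl⟩ |
    ⟨j, h1, h2, h, rfl⟩ | ⟨j, h1, h2, h, rfl⟩ | ⟨j, h1, h2, h, rfl⟩ | ⟨h, rfl⟩ | ⟨h, rfl⟩ <;>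
    simp at h
  all_goals subst h
  · exact Or.inl rfl
  · exact Or.inr rfl

section
variable {n c : ℕ} {π : BV → BV} {XX : BV → BV → Prop}

lemma m_t (hg : Good n π) {i : ℕ} (h1 : 1 ≤ i) (h2 : i ≤ n) (hX : XOK n π 1 XX)
    (hz : Tv n π < Av n π i) (hr : ∀ j, 1 ≤ j → j ≤ n → j ≠ i → Av n π j < Av n π i)
    (hnext : Good n (Function.update π BV.t (BV.a i)) →
      LX n c (Function.update π BV.t (BV.a i)) (addp XX BV.t (π BV.t))) : LX n (c + 2) π XX := by
  refine macro_sw hg (Et h1 h2) (fun v w hE h => (hX v w hE h).1)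
    (fun v w hE h => (hX v w hE h).2) ?_ ?_ ?_ hnext
  · intro v w hE h
    have := NV_pos (edge_vertex hE.1).1
    change NV n v < 1 at h; omega
  · rw [zt h2]; linarith
  · intro w hE hne
    obtain ⟨j, h3, h4, rfl⟩ := rows_t hE
    rw [zt h2, zt h4]
    have := hr j h3 h4 (by rintro rfl; exact hne rfl)
    linarith

lemma m_ab (hg : Good n π) {i : ℕ} (h1 : 1 ≤ i) (h2 : i ≤ n) (hX : XOK n π (2 * i) XX)
    (hl : NIlt n π i)
    (r1 : Av n π i < 2 ^ i + Bv n π i) (r2 : Av n π (i + 1) < 2 ^ i + Bv n π i)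
    (r3 : Tv n π - 2 ^ i + 5 / 4 < 2 ^ i + Bv n π i)
    (hnext : Good n (Function.update π (BV.a i) (BV.b i)) →
      LX n c (Function.update π (BV.a i) (BV.b i)) (addp XX (BV.a i) (π (BV.a i)))) :
    LX n (c + 2) π XX := by
  refine macro_sw hg (Eab h1 h2) (fun v w hE h => (hX v w hE h).1)
    (fun v w hE h => (hX v w hE h).2) (low_a h2 hl) ?_ ?_ hnext
  · rw [zab h2]; linarith
  · intro w hE hne
    rcases (rows_a hE).2 with rfl | rfl | rfl
    · exact absurd rfl hne
    · rw [zab h2, zaa h2]; linarith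
    · rw [zab h2, zat h2]; linarith

lemma m_aa (hg : Good n π) {i : ℕ} (h1 : 1 ≤ i) (h2 : i ≤ n) (hX : XOK n π (2 * i) XX)
    (hl : NIlt n π i)
    (r1 : Av n π i < Av n π (i + 1)) (r2 : 2 ^ i + Bv n π i < Av n π (i + 1))
    (r3 : Tv n π - 2 ^ i + 5 / 4 < Av n π (i + 1))
    (hnext : Good n (Function.update π (BV.a i) (aN n (i + 1))) →
      LX n c (Function.update π (BV.a i) (aN n (i + 1))) (addp XX (BV.a i) (π (BV.a i)))) :
    LX n (c + 2) π XX := by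
  refine macro_sw hg (Eaa h1 h2) (fun v w hE h => (hX v w hE h).1)
    (fun v w hE h => (hX v w hE h).2) (low_a h2 hl) ?_ ?_ hnext
  · rw [zaa h2]; linarith
  · intro w hE hne
    rcases (rows_a hE).2 with rfl | rfl | rfl
    · rw [zab h2, zaa h2]; linarith
    · exact absurd rfl hne
    · rw [zaa h2, zat h2]; linarith

lemma m_at (hg : Good n π) {i : ℕ} (h1 : 1 ≤ i) (h2 : i ≤ n) (hX : XOK n π (2 * i) XX)
    (hl : NIlt n π i)
    (r1 : Av n π i < Tv n π - 2 ^ i + 5 / 4) (r2 : 2 ^ i + Bv n π i < Tv n π - 2 ^ i + 5 / 4)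
    (r3 : Av n π (i + 1) < Tv n π - 2 ^ i + 5 / 4)
    (hnext : Good n (Function.update π (BV.a i) BV.t) →
      LX n c (Function.update π (BV.a i) BV.t) (addp XX (BV.a i) (π (BV.a i)))) :
    LX n (c + 2) π XX := by
  refine macro_sw hg (Eat h1 h2) (fun v w hE h => (hX v w hE h).1)
    (fun v w hE h => (hX v w hE h).2) (low_a h2 hl) ?_ ?_ hnext
  · rw [zat h2]; linarith
  · intro w hE hne
    rcases (rows_a hE).2 with rfl | rfl | rfl
    · rw [zab h2, zat h2]; linarith
    · rw [zaa h2, zat h2]; linarith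
    · exact absurd rfl hne

lemma m_bb (hg : Good n π) {i : ℕ} (h1 : 1 ≤ i) (h2 : i ≤ n) (hX : XOK n π (2 * i + 1) XX)
    (hl : NIlt n π i) (ha : NIa n π i)
    (r1 : Bv n π i < Bv n π (i + 1) + 3 / 4) (r2 : Av n π (i + 1) < Bv n π (i + 1) + 3 / 4)
    (hnext : Good n (Function.update π (BV.b i) (bN n (i + 1))) →
      LX n c (Function.update π (BV.b i) (bN n (i + 1))) (addp XX (BV.b i) (π (BV.b i)))) :
    LX n (c + 2) π XX := by
  refine macro_sw hg (Ebb h1 h2) (fun v w hE h => (hX v w hE h).1)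
    (fun v w hE h => (hX v w hE h).2) (low_b h2 hl ha) ?_ ?_ hnext
  · rw [zbb h2]; linarith
  · intro w hE hne
    rcases (rows_b hE).2 with rfl | rfl
    · exact absurd rfl hne
    · rw [zbb h2, zba h2]; linarith

lemma m_ba (hg : Good n π) {i : ℕ} (h1 : 1 ≤ i) (h2 : i ≤ n) (hX : XOK n π (2 * i + 1) XX)
    (hl : NIlt n π i) (ha : NIa n π i)
    (r1 : Bv n π i < Av n π (i + 1)) (r2 : Bv n π (i + 1) + 3 / 4 < Av n π (i + 1))
    (hnext : Good n (Function.update π (BV.b i) (aN n (i + 1))) →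
      LX n c (Function.update π (BV.b i) (aN n (i + 1))) (addp XX (BV.b i) (π (BV.b i)))) :
    LX n (c + 2) π XX := by
  refine macro_sw hg (Eba h1 h2) (fun v w hE h => (hX v w hE h).1)
    (fun v w hE h => (hX v w hE h).2) (low_b h2 hl ha) ?_ ?_ hnext
  · rw [zba h2]; linarith
  · intro w hE hne
    rcases (rows_b hE).2 with rfl | rfl
    · rw [zbb h2, zba h2]; linarith
    · exact absurd rfl hne

lemma c_t (hg : Good n π) {i : ℕ} (h1 : 1 ≤ i) (h2 : i ≤ n) (hX : XOK n π 1 XX)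
    (ht : NIt n π) (hz : Av n π i < Tv n π) (hnext : LX n c π XX) :
    LX n c π (addp XX BV.t (BV.a i)) := by
  refine clean_sw hg (Et h1 h2) (fun v w hE h => (hX v w hE h).1)
    (fun v w hE h => (hX v w hE h).2) ?_ ?_ hnext
  · intro v w hE h
    exact low_t ht v w hE (by change NV n v ≤ 1 at h; omega)
  · rw [zt h2]; linarith

lemma c_a (hg : Good n π) {i : ℕ} {w : BV} (hE : DEdgePair n (BV.a i) w)
    (hX : XOK n π (2 * i) XX)
    (hl : NIlt n π i) (ha : NIa n π i) (hz : zB n π (BV.a i) w < 0) (hnext : LX n c π XX) :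
    LX n c π (addp XX (BV.a i) w) := by
  refine clean_sw hg hE (fun v w hE h => (hX v w hE h).1)
    (fun v w hE h => (hX v w hE h).2) ?_ hz hnext
  intro v w' hE' h
  exact low_b (rows_a hE).1.2 hl ha v w' hE' (by simp only [NV] at h ⊢; omega)

lemma c_b (hg : Good n π) {i : ℕ} {w : BV} (hE : DEdgePair n (BV.b i) w)
    (hX : XOK n π (2 * i + 1) XX)
    (hl : NIlt n π i) (ha : NIa n π i) (hb : NIb n π i) (hz : zB n π (BV.b i) w < 0)
    (hnext : LX n c π XX) :
    LX n c π (addp XX (BV.b i) w) := by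
  refine clean_sw hg hE (fun v w hE h => (hX v w hE h).1)
    (fun v w hE h => (hX v w hE h).2) ?_ hz hnext
  intro v w' hE' h
  exact low_bb (rows_b hE).1.2 hl ha hb v w' hE' (by simp only [NV] at h ⊢; omega)

end

lemma XOK_mono {n : ℕ} {π : BV → BV} {N N' : ℕ} {XX XX' : BV → BV → Prop} (h : XOK n π N XX)
    (hN : N' ≤ N) (hX : ∀ v w, DEdgePair n v w → XX' v w → XX v w) : XOK n π N' XX' :=
  fun v w hE hx => ⟨(h v w hE (hX v w hE hx)).1, lt_of_le_of_lt hN (h v w hE (hX v w hE hx)).2⟩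

lemma XOK_add {n : ℕ} {π : BV → BV} {N : ℕ} {XX : BV → BV → Prop} {v w : BV} (h : XOK n π N XX)
    (hz : zB n π v w ≤ 0) (hN : N < NV n v) : XOK n π N (addp XX v w) := by
  rintro a b hE (hx | ⟨rfl, rfl⟩)
  · exact h a b hE hx
  · exact ⟨hz, hN⟩

/-! Ones -/
structure Ones (n j : ℕ) (π : BV → BV) : Prop where
  t : π BV.t = BV.a 1
  a : ∀ i, 1 ≤ i → i ≤ j → π (BV.a i) = BV.b i
  b : ∀ i, 1 ≤ i → i < j → π (BV.b i) = aN n (i + 1)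

lemma pw (i : ℕ) : (2 : ℚ) ^ (i + 1) = 2 * 2 ^ i := by ring

lemma ones_A {n j : ℕ} {π : BV → BV} (hg : Good n π) (ho : Ones n j π) (hjn : j ≤ n) :
    ∀ d i, i + d = j → 1 ≤ i → Av n π i = 2 ^ (j + 1) - 2 ^ i + Bv n π j := by
  intro d
  induction d with
  | zero =>
    intro i hd h1
    obtain rfl : i = j := by omega
    rw [vab hg h1 hjn (ho.a i h1 le_rfl), pw]; ring
  | succ d ih =>
    intro i hd h1
    rw [vab hg h1 (by omega) (ho.a i h1 (by omega)), vba hg h1 (by omega) (ho.b i h1 (by omega)),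
      ih (i + 1) (by omega) (by omega), pw i]
    ring

lemma ones_Av {n j : ℕ} {π : BV → BV} (hg : Good n π) (ho : Ones n j π) (hjn : j ≤ n)
    {i : ℕ} (h1 : 1 ≤ i) (h2 : i ≤ j) : Av n π i = 2 ^ (j + 1) - 2 ^ i + Bv n π j :=
  ones_A hg ho hjn (j - i) i (by omega) h1

lemma ones_Bv {n j : ℕ} {π : BV → BV} (hg : Good n π) (ho : Ones n j π) (hjn : j ≤ n)
    {i : ℕ} (h1 : 1 ≤ i) (h2 : i ≤ j) : Bv n π i = 2 ^ (j + 1) - 2 ^ (i + 1) + Bv n π j := by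
  rcases Nat.lt_or_ge i j with h | h
  · rw [vba hg h1 (by omega) (ho.b i h1 h), ones_Av hg ho hjn (by omega) (by omega)]
  · obtain rfl : i = j := by omega
    ring

lemma ones_T {n j : ℕ} {π : BV → BV} (hg : Good n π) (ho : Ones n j π) (hj : 1 ≤ j)
    (hjn : j ≤ n) : Tv n π = 2 ^ (j + 1) - 2 + Bv n π j := by
  rw [vt hg (by omega) ho.t, ones_Av hg ho hjn le_rfl hj]; norm_num

lemma ones_NIt {n j : ℕ} {π : BV → BV} (hg : Good n π) (ho : Ones n j π) (hj : 1 ≤ j)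
    (hjn : j ≤ n) (hh : ∀ i, j < i → i ≤ n → Av n π i ≤ Tv n π) : NIt n π := by
  intro i h1 h2
  rcases Nat.lt_or_ge j i with h | h
  · exact hh i h h2
  · rw [ones_T hg ho hj hjn, ones_Av hg ho hjn h1 h]
    linarith [two_le_pow h1]

lemma ones_NI {n j : ℕ} {π : BV → BV} (hg : Good n π) (ho : Ones n j π) (hj : 1 ≤ j)
    (hjn : j ≤ n) (hh : ∀ i, j < i → i ≤ n → Av n π i ≤ Tv n π) : NIlt n π j := by
  refine ⟨ones_NIt hg ho hj hjn hh, fun i h1 h2 => ?_⟩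
  have hA := ones_Av hg ho hjn h1 (by omega)
  have hA' := ones_Av hg ho hjn (i := i + 1) (by omega) (by omega)
  have hB := ones_Bv hg ho hjn h1 (by omega)
  have hB' := ones_Bv hg ho hjn (i := i + 1) (by omega) (by omega)
  have hT := ones_T hg ho hj hjn
  have e1 := pw i
  have e2 := pw (i + 1)
  have e3 := two_le_pow h1
  refine ⟨⟨?_, ?_, ?_⟩, ?_, ?_⟩ <;> linarith

lemma ones_NIa {n j : ℕ} {π : BV → BV} (hg : Good n π) (ho : Ones n j π) (hj : 1 ≤ j)
    (hjn : j ≤ n) (hh : Av n π (j + 1) ≤ 2 ^ j + Bv n π j) : NIa n π j := by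
  have hA := ones_Av hg ho hjn hj le_rfl
  have hT := ones_T hg ho hj hjn
  have e1 := pw j
  refine ⟨?_, ?_, ?_⟩ <;> linarith

lemma arith {a b : ℕ} (h : a ≤ b) : (2 : ℚ) ^ a + 3 / 4 * ((b : ℚ) - a) ≤ 2 ^ b := by
  induction b, h using Nat.le_induction with
  | base => simp
  | succ b hb ih =>
    rw [pw]
    have : (1 : ℚ) ≤ 2 ^ b := one_le_pow₀ (by norm_num)
    push_cast; linarith

end LI


namespace LI

def Hi (k : ℕ) : BV → Prop
  | BV.t => False
  | BV.s => True
  | BV.d => True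
  | BV.a i => k < i
  | BV.b i => k ≤ i

def Hyp (n k : ℕ) (π : BV → BV) (X : BV → BV → Prop) : Prop :=
  ∀ π', Good n π' → (∀ v, Hi k v → π' v = π v) →
    2 ^ k - 5 / 4 ≤ Tv n π' - Bv n π' k → Tv n π' - Bv n π' k ≤ 2 ^ (k + 1) - 2 →
    Av n π' (k + 1) ≤ Bv n π' k ∧ (∀ j, k < j → j ≤ n → Av n π' j ≤ Tv n π') ∧
    ∀ v w, DEdgePair n v w → Hi k v → X v w → zB n π' v w ≤ 0

def XX1 (k : ℕ) (X : BV → BV → Prop) (w0 : BV) : BV → BV → Prop :=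
  fun v w => (v = BV.a k ∧ w = w0) ∨ (Hi k v ∧ X v w)

structure Ctx (n q : ℕ) (π0 : BV → BV) (X : BV → BV → Prop) (w0 : BV) : Prop where
  hq : q + 2 ≤ n
  hyp : Hyp n (q + 2) π0 X
  hw : w0 ≠ BV.b (q + 2)

structure Top (n k : ℕ) (π0 π : BV → BV) : Prop where
  good : Good n π
  agree : ∀ v, Hi k v → π v = π0 v
  ak : π (BV.a k) = BV.b k

lemma Top.upd {n k : ℕ} {π0 π : BV → BV} (h : Top n k π0 π) {u w : BV}
    (hg : Good n (Function.update π u w)) (hu : ¬ Hi k u) (hu' : u ≠ BV.a k) :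
    Top n k π0 (Function.update π u w) := by
  refine ⟨hg, fun v hv => ?_, ?_⟩
  · rw [Function.update_of_ne (by rintro rfl; exact hu hv)]
    exact h.agree v hv
  · rw [Function.update_of_ne (Ne.symm hu')]
    exact h.ak

lemma Hi_NV {n k : ℕ} {v : BV} (hk : k ≤ n) (h : Hi k v) : 2 * k < NV n v := by
  cases v <;> simp only [Hi, NV] at * <;> omega

section
variable {n q : ℕ} {π0 π : BV → BV} {X : BV → BV → Prop} {w0 : BV}

lemma top_U (C : Ctx n q π0 X w0) (tp : Top n (q + 2) π0 π) :
    Av n π (q + 2) = 2 ^ (q + 2) + Bv n π (q + 2) :=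
  vab tp.good (by omega) C.hq tp.ak

lemma top_facts (C : Ctx n q π0 X w0) (tp : Top n (q + 2) π0 π)
    (r1 : Av n π (q + 2) - 5 / 4 ≤ Tv n π) (r2 : Tv n π ≤ Av n π (q + 2) + 2 ^ (q + 2) - 2) :
    Av n π (q + 3) ≤ Bv n π (q + 2) ∧ (∀ j, q + 2 < j → j ≤ n → Av n π j ≤ Tv n π) ∧
    XOK n π (2 * q + 3) (XX1 (q + 2) X w0) := by
  have hU := top_U C tp
  have e := pw (q + 2)
  obtain ⟨h1, h2, h3⟩ := C.hyp π tp.good tp.agree (by linarith) (by linarith)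
  refine ⟨h1, h2, ?_⟩
  rintro v w hE (⟨rfl, rfl⟩ | ⟨h, hx⟩)
  · refine ⟨?_, by simp only [NV]; omega⟩
    have h0 : (0 : ℚ) < 2 ^ (q + 2) := by positivity
    rcases (rows_a hE).2 with rfl | rfl | rfl
    · exact absurd rfl C.hw
    · rw [zaa C.hq]
      have : Av n π (q + 2 + 1) ≤ Bv n π (q + 2) := h1
      linarith
    · rw [zat C.hq]; linarith
  · refine ⟨h3 v w hE h hx, ?_⟩
    have := Hi_NV C.hq h
    omega

end

structure StA (n q i : ℕ) (π : BV → BV) : Prop where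
  t : π BV.t = BV.a (q + 2)
  tt : ∀ j, 1 ≤ j → j ≤ i → π (BV.a j) = BV.t
  ab : ∀ j, i < j → j ≤ q + 1 → π (BV.a j) = BV.b j
  ba : ∀ j, 1 ≤ j → j ≤ q → π (BV.b j) = aN n (j + 1)
  bb : π (BV.b (q + 1)) = bN n (q + 2)

structure Tail (n q l : ℕ) (π : BV → BV) : Prop where
  tt : ∀ j, l < j → j ≤ q → π (BV.a j) = BV.t
  aa : π (BV.a (q + 1)) = aN n (q + 2)
  bb : ∀ j, l ≤ j → j < q → π (BV.b j) = bN n (j + 1)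
  bq : π (BV.b q) = aN n (q + 1)
  bk : π (BV.b (q + 1)) = bN n (q + 2)

structure StC (n q i : ℕ) (π : BV → BV) : Prop where
  t : π BV.t = BV.a (q + 2)
  tt : ∀ j, 1 ≤ j → j ≤ q → π (BV.a j) = BV.t
  ba : ∀ j, 1 ≤ j → j < i → π (BV.b j) = aN n (j + 1)
  tail : Tail n q i π

def XM (n q : ℕ) (X : BV → BV → Prop) (w0 : BV) (l : ℕ) : BV → BV → Prop :=
  fun v w => XX1 (q + 2) X w0 v w ∨ (∃ i, l ≤ i ∧ i < q ∧ v = BV.b i ∧ w = aN n (i + 1)) ∨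
    (v = BV.a (q + 1) ∧ w = BV.b (q + 1))

section
variable {n q : ℕ} {π0 π : BV → BV} {X : BV → BV → Prop} {w0 : BV}

/-- Values in the states `A(i)`. -/
lemma A_vals (C : Ctx n q π0 X w0) (tp : Top n (q + 2) π0 π) {i : ℕ} (hi : i ≤ q)
    (h : StA n q i π) :
    Tv n π = Av n π (q + 2) ∧ Bv n π (q + 1) = Av n π (q + 2) - 2 ^ (q + 2) + 3 / 4 ∧
    (∀ j, 1 ≤ j → j ≤ i → Av n π j = Av n π (q + 2) - 2 ^ j + 5 / 4) ∧
    (∀ j, 1 ≤ j → i < j → j ≤ q + 1 → Av n π j = Av n π (q + 2) - 2 ^ j + 3 / 4) ∧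
    (∀ j, 1 ≤ j → j ≤ q → Bv n π j = Av n π (j + 1)) := by
  have hg := tp.good
  have hq := C.hq
  have hU := top_U C tp
  have hT := vt hg hq h.t
  have hb := vbb hg (i := q + 1) (by omega) (by omega) h.bb
  have hB : Bv n π (q + 1) = Av n π (q + 2) - 2 ^ (q + 2) + 3 / 4 := by
    have : Bv n π (q + 1) = Bv n π (q + 2) + 3 / 4 := hb
    linarith
  have hba : ∀ j, 1 ≤ j → j ≤ q → Bv n π j = Av n π (j + 1) :=
    fun j h1 h2 => vba hg h1 (by omega) (h.ba j h1 h2)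
  refine ⟨hT, hB, ?_, ?_, hba⟩
  · intro j h1 h2
    rw [vat hg h1 (by omega) (h.tt j h1 h2), hT]
  · have : ∀ d j, j + d = q + 1 → 1 ≤ j → i < j →
        Av n π j = Av n π (q + 2) - 2 ^ j + 3 / 4 := by
      intro d
      induction d with
      | zero =>
        intro j hd h1 h2
        obtain rfl : j = q + 1 := by omega
        rw [vab hg h1 (by omega) (h.ab _ h2 le_rfl), hB, pw (q + 1)]; ring
      | succ d ih =>
        intro j hd h1 h2
        rw [vab hg h1 (by omega) (h.ab _ h2 (by omega)), hba j h1 (by omega),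
          ih (j + 1) (by omega) (by omega) (by omega), pw j]
        ring
    intro j h1 h2 h3
    exact this (q + 1 - j) j (by omega) h1 h2

lemma A_NI (C : Ctx n q π0 X w0) (tp : Top n (q + 2) π0 π) {i : ℕ} (hi : i ≤ q)
    (h : StA n q i π) : NIt n π ∧ (∀ j, 1 ≤ j → j ≤ i → NIa n π j ∧ NIb n π j) ∧
    XOK n π (2 * q + 3) (XX1 (q + 2) X w0) := by
  obtain ⟨hT, hB, h1, h2, h3⟩ := A_vals C tp hi h
  have hp : (4 : ℚ) ≤ 2 ^ (q + 2) := by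
    have := pow_mono (show 2 ≤ q + 2 by omega); linarith
  obtain ⟨f1, f2, f3⟩ := top_facts C tp (by linarith) (by linarith)
  have hle : ∀ j, 1 ≤ j → j ≤ q + 1 → Av n π j ≤ Av n π (q + 2) - 2 ^ j + 5 / 4 ∧
      Av n π (q + 2) - 2 ^ j + 3 / 4 ≤ Av n π j := by
    intro j a1 a2
    rcases Nat.lt_or_ge i j with a3 | a3
    · have := h2 j a1 a3 a2; constructor <;> linarith
    · have := h1 j a1 a3; constructor <;> linarith
  refine ⟨?_, ?_, f3⟩
  · intro j a1 a2
    rcases Nat.lt_or_ge (q + 2) j with a3 | a3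
    · exact f2 j a3 a2
    · rcases Nat.lt_or_ge j (q + 2) with a4 | a4
      · have := (hle j a1 (by omega)).1
        have := two_le_pow a1
        linarith
      · obtain rfl : j = q + 2 := by omega
        linarith
  · intro j a1 a2
    have b1 := h1 j a1 a2
    have b2 := h3 j a1 (by omega)
    have b3 := hle (j + 1) (by omega) (by omega)
    have e1 := pw j
    have e2 := pw (j + 1)
    have e3 := two_le_pow a1
    have b4 : Bv n π (j + 1) + 3 / 4 ≤ Bv n π j := by
      rcases Nat.lt_or_ge j q with a3 | a3
      · have b4 := h3 (j + 1) (by omega) (by omega)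
        have b5 := hle (j + 1 + 1) (by omega) (by omega)
        linarith
      · obtain rfl : j = q := by omega
        linarith
    refine ⟨⟨?_, ?_, ?_⟩, ?_, ?_⟩ <;> linarith

lemma A_step (C : Ctx n q π0 X w0) (tp : Top n (q + 2) π0 π) {i c : ℕ} (hi : i + 1 ≤ q)
    (h : StA n q i π)
    (hnext : ∀ π', Top n (q + 2) π0 π' → StA n q (i + 1) π' → LX n c π' (XX1 (q + 2) X w0)) :
    LX n (c + 2) π (XX1 (q + 2) X w0) := by
  have hq := C.hq
  obtain ⟨hT, hB, h1, h2, h3⟩ := A_vals C tp (by omega) h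
  obtain ⟨n1, n2, n3⟩ := A_NI C tp (by omega) h
  have e1 := pw (i + 1)
  have e2 := two_le_pow (show 1 ≤ i + 1 by omega)
  have b1 := h2 (i + 1) (by omega) (by omega) (by omega)
  have b2 := h2 (i + 1 + 1) (by omega) (by omega) (by omega)
  have b3 := h3 (i + 1) (by omega) (by omega)
  refine m_at tp.good (i := i + 1) (by omega) (by omega)
    (XOK_mono n3 (by omega) fun _ _ _ h => h)
    ⟨n1, fun j a1 a2 => n2 j a1 (by omega)⟩ (by linarith) (by linarith) (by linarith) ?_
  intro hg'
  have tp' := tp.upd hg' (by simp [Hi]; omega) (by simp; omega)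
  have hA' : StA n q (i + 1) (Function.update π (BV.a (i + 1)) BV.t) := by
    obtain ⟨s1, s2, s3, s4, s5⟩ := h
    constructor <;> grind [Function.update_apply]
  rw [h.ab (i + 1) (by omega) (by omega)]
  obtain ⟨hT, hB, h1, h2, h3⟩ := A_vals C tp' (by omega) hA'
  obtain ⟨n1, n2, n3⟩ := A_NI C tp' (by omega) hA'
  have b1 := h1 (i + 1) (by omega) (by omega)
  have b2 := h2 (i + 1 + 1) (by omega) (by omega) (by omega)
  have b3 := h3 (i + 1) (by omega) (by omega)
  refine c_a tp'.good (Eab (by omega) (by omega)) (XOK_mono n3 (by omega) fun _ _ _ h => h)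
    ⟨n1, fun j a1 a2 => n2 j a1 (by omega)⟩ (n2 _ (by omega) le_rfl).1 ?_ (hnext _ tp' hA')
  rw [zab (by omega)]; linarith

lemma A_loop (C : Ctx n q π0 X w0) {c : ℕ}
    (hnext : ∀ π', Top n (q + 2) π0 π' → StA n q q π' → LX n c π' (XX1 (q + 2) X w0)) :
    ∀ d i, i + d = q → ∀ π, Top n (q + 2) π0 π → StA n q i π → LX n c π (XX1 (q + 2) X w0) := by
  intro d
  induction d with
  | zero =>
    intro i hd π tp h
    obtain rfl : i = q := by omega
    exact hnext π tp h
  | succ d ih =>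
    intro i hd π tp h
    exact LX_mono (A_step C tp (by omega) h (ih (i + 1) (by omega))) (by omega)
      fun _ _ _ h => h

/-- Values on the tail. -/
lemma tail_B (C : Ctx n q π0 X w0) (tp : Top n (q + 2) π0 π) {l : ℕ} (hl : 1 ≤ l) (hlq : l ≤ q)
    (h : Tail n q l π) :
    Av n π (q + 1) = Av n π (q + 2) ∧ Bv n π (q + 1) = Av n π (q + 2) - 2 ^ (q + 2) + 3 / 4 ∧
    (∀ j, l ≤ j → j ≤ q → Bv n π j = Av n π (q + 2) + 3 / 4 * ((q : ℚ) - j)) ∧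
    (∀ j, l < j → j ≤ q → Av n π j = Tv n π - 2 ^ j + 5 / 4) := by
  have hg := tp.good
  have hq := C.hq
  have hU := top_U C tp
  have ha : Av n π (q + 1) = Av n π (q + 2) := vaa hg (i := q + 1) (by omega) (by omega) h.aa
  have hb : Bv n π (q + 1) = Bv n π (q + 2) + 3 / 4 :=
    vbb hg (i := q + 1) (by omega) (by omega) h.bk
  refine ⟨ha, by linarith, ?_, fun j h1 h2 => vat hg (by omega) (by omega) (h.tt j h1 h2)⟩
  have : ∀ d j, j + d = q → l ≤ j → Bv n π j = Av n π (q + 2) + 3 / 4 * ((q : ℚ) - j) := by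
    intro d
    induction d with
    | zero =>
      intro j hd h1
      obtain rfl : j = q := by omega
      rw [vba hg (by omega) (by omega) h.bq, ha]; ring
    | succ d ih =>
      intro j hd h1
      rw [vbb hg (by omega) (by omega) (h.bb j h1 (by omega)), ih (j + 1) (by omega) (by omega)]
      push_cast; ring
  intro j h1 h2
  exact this (q - j) j (by omega) h1

lemma tail_facts (C : Ctx n q π0 X w0) (tp : Top n (q + 2) π0 π) {l : ℕ} (hl : 1 ≤ l)
    (hlq : l ≤ q) (h : Tail n q l π) (r1 : Av n π (q + 2) ≤ Tv n π)
    (r2 : Tv n π ≤ Bv n π l + 2 ^ (l + 1) - 2) :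
    Av n π (l + 1) ≤ Bv n π l ∧ (l < q → Av n π (l + 1) < Bv n π l) ∧
    (∀ j, l < j → j ≤ n → Av n π j ≤ Tv n π) ∧
    XOK n π (2 * q + 3) (XX1 (q + 2) X w0) ∧ XOK n π (2 * l) (XM n q X w0 l) := by
  have hq := C.hq
  obtain ⟨t1, t2, t3, t4⟩ := tail_B C tp hl hlq h
  have ar := arith (show l + 1 ≤ q + 1 by omega)
  have hBl := t3 l le_rfl hlq
  have e0 := pw (q + 1)
  have ep := two_le_pow (show 1 ≤ q + 1 by omega)
  push_cast at ar
  obtain ⟨f1, f2, f3⟩ := top_facts C tp (by linarith) (by linarith)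
  have hql : (l : ℚ) ≤ q := by exact_mod_cast hlq
  have p1 : l < q → Av n π (l + 1) < Bv n π l := by
    intro hlt
    have := t4 (l + 1) (by omega) (by omega)
    linarith
  have p2 : Av n π (l + 1) ≤ Bv n π l := by
    rcases Nat.lt_or_ge l q with a | a
    · exact (p1 a).le
    · obtain rfl : l = q := by omega
      rw [hBl, t1]; linarith
  refine ⟨p2, p1, ?_, f3, ?_⟩
  · intro j a1 a2
    rcases Nat.lt_or_ge (q + 2) j with a3 | a3
    · exact f2 j a3 a2
    · rcases Nat.lt_or_ge q j with a4 | a4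
      · rcases Nat.lt_or_ge j (q + 2) with a5 | a5
        · obtain rfl : j = q + 1 := by omega
          linarith
        · obtain rfl : j = q + 2 := by omega
          linarith
      · have := t4 j a1 a4
        have := two_le_pow (show 1 ≤ j by omega)
        linarith
  · rintro v w hE (h1 | ⟨i, a1, a2, rfl, rfl⟩ | ⟨rfl, rfl⟩)
    · have := f3 v w hE h1
      exact ⟨this.1, by omega⟩
    · refine ⟨?_, by simp only [NV]; omega⟩
      rw [zba (by omega)]
      have b1 := t4 (i + 1) (by omega) (by omega)
      have b2 := t3 i a1 (by omega)
      have ar := arith (show l + 1 ≤ i + 1 by omega)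
      push_cast at ar
      linarith
    · refine ⟨?_, by simp only [NV]; omega⟩
      rw [zab (by omega)]
      linarith

end

end LI


namespace LI

lemma Tail.mono {n q l l' : ℕ} {π : BV → BV} (h : Tail n q l π) (hl : l ≤ l') : Tail n q l' π :=
  ⟨fun j h1 h2 => h.tt j (by omega) h2, h.aa, fun j h1 h2 => h.bb j (by omega) h2, h.bq, h.bk⟩

section
variable {n q : ℕ} {π0 π : BV → BV} {X : BV → BV → Prop} {w0 : BV}

lemma A_to_C (C : Ctx n q π0 X w0) {c : ℕ} (hq1 : 1 ≤ q)
    (hnext : ∀ π', Top n (q + 2) π0 π' → StC n q q π' → LX n c π' (XM n q X w0 q))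
    (tp : Top n (q + 2) π0 π) (h : StA n q q π) : LX n c π (XX1 (q + 2) X w0) := by
  have hq := C.hq
  obtain ⟨hT, hB, h1, h2, h3⟩ := A_vals C tp le_rfl h
  obtain ⟨n1, n2, n3⟩ := A_NI C tp le_rfl h
  have e1 := pw (q + 1)
  have e2 := two_le_pow (show 1 ≤ q + 1 by omega)
  have b1 := h2 (q + 1) (by omega) (by omega) (by omega)
  have b2 : Av n π (q + 1 + 1) = Av n π (q + 2) := rfl
  refine LX_mono (c := c + 2) (m_aa tp.good (i := q + 1) (by omega) (by omega)
    (XOK_mono n3 (by omega) fun _ _ _ h => h)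
    ⟨n1, fun j a1 a2 => n2 j a1 (by omega)⟩ (by linarith) (by linarith) (by linarith) ?_)
    (by omega) (fun _ _ _ h => h)
  intro hg'
  have tp' := tp.upd hg' (by simp [Hi]) (by simp)
  have hC : StC n q q (Function.update π (BV.a (q + 1)) (aN n (q + 1 + 1))) := by
    obtain ⟨s1, s2, s3, s4, s5⟩ := h
    refine ⟨?_, ?_, ?_, ?_, ?_, ?_, ?_, ?_⟩ <;> grind [Function.update_apply]
  rw [h.ab (q + 1) (by omega) (by omega)]
  refine LX_mono (hnext _ tp' hC) le_rfl ?_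
  rintro v w _ (h | ⟨rfl, rfl⟩)
  · exact Or.inl h
  · exact Or.inr (Or.inr ⟨rfl, rfl⟩)

lemma C_vals (C : Ctx n q π0 X w0) (tp : Top n (q + 2) π0 π) {i : ℕ} (h1 : 1 ≤ i) (hi : i ≤ q)
    (h : StC n q i π) :
    Tv n π = Av n π (q + 2) ∧
    (∀ j, 1 ≤ j → j ≤ q → Av n π j = Av n π (q + 2) - 2 ^ j + 5 / 4) ∧
    (∀ j, 1 ≤ j → j < i → Bv n π j = Av n π (j + 1)) ∧
    Av n π (q + 2) ≤ Bv n π i ∧ Av n π (i + 1) ≤ Bv n π i ∧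
    NIt n π ∧ XOK n π (2 * i) (XM n q X w0 i) := by
  have hg := tp.good
  have hq := C.hq
  have hT := vt hg hq h.t
  obtain ⟨t1, t2, t3, t4⟩ := tail_B C tp h1 hi h.tail
  have hBi := t3 i le_rfl hi
  have hqi : (i : ℚ) ≤ q := by exact_mod_cast hi
  have e := two_le_pow (show 1 ≤ i + 1 by omega)
  obtain ⟨f1, f2, f3, f4, f5⟩ := tail_facts C tp h1 hi h.tail (by linarith) (by linarith)
  have hA : ∀ j, 1 ≤ j → j ≤ q → Av n π j = Av n π (q + 2) - 2 ^ j + 5 / 4 := by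
    intro j a1 a2
    rw [vat hg a1 (by omega) (h.tt j a1 a2), hT]
  refine ⟨hT, hA, fun j a1 a2 => vba hg a1 (by omega) (h.ba j a1 a2), by linarith, f1, ?_, f5⟩
  intro j a1 a2
  rcases Nat.lt_or_ge i j with a3 | a3
  · exact f3 j a3 a2
  · rw [hA j a1 (by omega)]
    linarith [two_le_pow a1]

lemma C_step (C : Ctx n q π0 X w0) {c p : ℕ} (hp : 1 ≤ p) (hpq : p + 1 ≤ q)
    (hnext : ∀ π', Top n (q + 2) π0 π' → StC n q p π' → LX n c π' (XM n q X w0 p))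
    (tp : Top n (q + 2) π0 π) (h : StC n q (p + 1) π) : LX n c π (XM n q X w0 (p + 1)) := by
  have hq := C.hq
  obtain ⟨hT, hA, hB, b1, b2, n1, n2⟩ := C_vals C tp (by omega) hpq h
  have hBp := hB p hp (by omega)
  have hAp := hA (p + 1) (by omega) (by omega)
  have ep := two_le_pow (show 1 ≤ p + 1 by omega)
  have hNa : ∀ j, 1 ≤ j → j < p + 1 → NIa n π j := by
    intro j a1 a2
    have c1 := hA j a1 (by omega)
    have c2 := hA (j + 1) (by omega) (by omega)
    have c3 := hB j a1 (by omega)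
    have e1 := pw j
    have e2 := two_le_pow a1
    refine ⟨?_, ?_, ?_⟩ <;> linarith
  refine LX_mono (c := c + 2) (m_bb tp.good (i := p) (by omega) (by omega)
    (XOK_mono n2 (by omega) fun _ _ _ h => h)
    ⟨n1, fun j a1 a2 => ⟨hNa j a1 (by omega), ?_⟩⟩ (hNa p hp (by omega)) (by linarith)
    (by linarith) ?_) (by omega) (fun _ _ _ h => h)
  · have c3 := hB j a1 (by omega)
    have c4 := hB (j + 1) (by omega) (by omega)
    have c5 := hA (j + 1) (by omega) (by omega)
    have c6 := hA (j + 1 + 1) (by omega) (by omega)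
    have e1 := pw (j + 1)
    have e2 := two_le_pow (show 1 ≤ j + 1 by omega)
    refine ⟨?_, ?_⟩ <;> linarith
  intro hg'
  have tp' := tp.upd hg' (by simp [Hi]; omega) (by simp)
  have hC : StC n q p (Function.update π (BV.b p) (bN n (p + 1))) := by
    obtain ⟨s1, s2, s3, s4, s5, s6, s7, s8⟩ := h
    refine ⟨?_, ?_, ?_, ?_, ?_, ?_, ?_, ?_⟩ <;> grind [Function.update_apply]
  rw [h.ba p (by omega) (by omega)]
  refine LX_mono (hnext _ tp' hC) le_rfl ?_
  rintro v w _ ((h | ⟨i, h1, h2, h3⟩ | h) | ⟨rfl, rfl⟩)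
  · exact Or.inl h
  · exact Or.inr (Or.inl ⟨i, by omega, h2, h3⟩)
  · exact Or.inr (Or.inr h)
  · exact Or.inr (Or.inl ⟨p, le_rfl, by omega, rfl, rfl⟩)

lemma C_loop (C : Ctx n q π0 X w0) {c : ℕ}
    (hnext : ∀ π', Top n (q + 2) π0 π' → StC n q 1 π' → LX n c π' (XM n q X w0 1)) :
    ∀ i, 1 ≤ i → i ≤ q → ∀ π, Top n (q + 2) π0 π → StC n q i π → LX n c π (XM n q X w0 i) := by
  intro i hi
  induction i, hi using Nat.le_induction with
  | base => exact fun _ => hnext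
  | succ p hp ih => exact fun hpq π tp h => C_step C hp hpq (ih (by omega)) tp h

/-- Basic facts in the states `O(j)`. -/
lemma O_facts (C : Ctx n q π0 X w0) (tp : Top n (q + 2) π0 π) {j : ℕ} (hj : 1 ≤ j) (hjq : j ≤ q)
    (ho : Ones n j π) (ht : Tail n q j π) :
    Tv n π = 2 ^ (j + 1) - 2 + Bv n π j ∧
    Bv n π j = Av n π (q + 2) + 3 / 4 * ((q : ℚ) - j) ∧ Av n π (q + 2) ≤ Bv n π j ∧
    Av n π (j + 1) ≤ Bv n π j ∧ (j < q → Av n π (j + 1) < Bv n π j) ∧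
    NIlt n π j ∧ NIa n π j ∧ XOK n π (2 * j) (XM n q X w0 j) ∧
    XOK n π (2 * q + 3) (XX1 (q + 2) X w0) := by
  have hg := tp.good
  have hq := C.hq
  have hT := ones_T hg ho hj (by omega)
  obtain ⟨t1, t2, t3, t4⟩ := tail_B C tp hj hjq ht
  have hBi := t3 j le_rfl hjq
  have hqi : (j : ℚ) ≤ q := by exact_mod_cast hjq
  have e := two_le_pow (show 1 ≤ j + 1 by omega)
  have e' := two_le_pow (show 1 ≤ j by omega)
  obtain ⟨f1, f2, f3, f4, f5⟩ := tail_facts C tp hj hjq ht (by linarith) (by linarith)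
  exact ⟨hT, hBi, by linarith, f1, f2, ones_NI hg ho hj (by omega) f3,
    ones_NIa hg ho hj (by omega) (by linarith), f5, f4⟩

lemma O_clean (C : Ctx n q π0 X w0) (tp : Top n (q + 2) π0 π) {j c : ℕ} (hj : 1 ≤ j)
    (hjq : j ≤ q) (ho : Ones n j π) (ht : Tail n q j π)
    (hnext : LX n c π (XM n q X w0 (j + 1))) :
    LX n c π (addp (XM n q X w0 j) (BV.a j) BV.t) := by
  have hg := tp.good
  have hq := C.hq
  obtain ⟨hT, hBi, hBU, f1, f2, f3, f4, f5, f6⟩ := O_facts C tp hj hjq ho ht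
  have hA := ones_Av hg ho (by omega) hj le_rfl
  refine c_a hg (Eat hj (by omega)) f5 f3 f4 (by rw [zat (by omega)]; linarith) ?_
  rcases Nat.lt_or_ge j q with hlt | hge
  · have hbb := vbb hg hj (by omega) (ht.bb j le_rfl hlt)
    have e := two_le_pow (show 1 ≤ j + 1 by omega)
    have e1 := pw (j + 1)
    have g := tail_facts C tp (l := j + 1) (by omega) hlt (ht.mono (by omega))
      (by linarith) (by linarith)
    refine LX_mono (c_b hg (Eba hj (by omega)) (XOK_mono g.2.2.2.2 (by omega) fun _ _ _ h => h)
      f3 f4 ⟨by linarith, f1⟩ (by rw [zba (by omega)]; linarith [f2 hlt]) hnext) le_rfl ?_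
    rintro v w _ (h | ⟨i, h1, h2, h3, h4⟩ | h)
    · exact Or.inl (Or.inl h)
    · rcases Nat.lt_or_ge j i with h5 | h5
      · exact Or.inl (Or.inr (Or.inl ⟨i, h5, h2, h3, h4⟩))
      · obtain rfl : i = j := by omega
        exact Or.inr ⟨h3, h4⟩
    · exact Or.inl (Or.inr (Or.inr h))
  · refine LX_mono hnext le_rfl ?_
    rintro v w _ (h | ⟨i, h1, h2, h3, h4⟩ | h)
    · exact Or.inl h
    · omega
    · exact Or.inr (Or.inr h)

lemma C_to_O (C : Ctx n q π0 X w0) {c : ℕ} (hq1 : 1 ≤ q)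
    (hnext : ∀ π', Top n (q + 2) π0 π' → Ones n 1 π' → Tail n q 1 π' →
      LX n c π' (XM n q X w0 2))
    (tp : Top n (q + 2) π0 π) (h : StC n q 1 π) : LX n (c + 2) π (XM n q X w0 1) := by
  have hq := C.hq
  obtain ⟨hT, hA, hB, b1, b2, n1, n2⟩ := C_vals C tp le_rfl hq1 h
  have hA1 := hA 1 le_rfl hq1
  have p1 : (2 : ℚ) ^ 1 = 2 := by norm_num
  have p2 : (2 : ℚ) ^ (1 + 1) = 4 := by norm_num
  refine LX_mono (c := c + 2 + 2) (m_ab tp.good (i := 1) le_rfl (by omega) n2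
    ⟨n1, fun j a1 a2 => by omega⟩ (by linarith) (by linarith) (by linarith) ?_)
    (by omega) (fun _ _ _ h => h)
  intro hg'
  have tp' := tp.upd hg' (by simp [Hi]) (by simp)
  rw [h.tt 1 le_rfl hq1]
  obtain ⟨ht, htt, hba, htl⟩ := h
  have ht' : Function.update π (BV.a 1) (BV.b 1) BV.t = BV.a (q + 2) := by
    grind [Function.update_apply]
  have ha' : Function.update π (BV.a 1) (BV.b 1) (BV.a 1) = BV.b 1 := by simp
  have htl' : Tail n q 1 (Function.update π (BV.a 1) (BV.b 1)) := by
    obtain ⟨s4, s5, s6, s7, s8⟩ := htl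
    refine ⟨?_, ?_, ?_, ?_, ?_⟩ <;> grind [Function.update_apply]
  clear hT hA hB b1 b2 n1 n2 hA1 ht htt hba htl tp
  revert hg' tp' ht' ha' htl'
  generalize Function.update π (BV.a 1) (BV.b 1) = π
  intro hg tp ht ha htl
  have hT := vt hg hq ht
  obtain ⟨t1, t2, t3, t4⟩ := tail_B C tp le_rfl hq1 htl
  have hBi := t3 1 le_rfl hq1
  have hqi : ((1 : ℕ) : ℚ) ≤ q := by exact_mod_cast hq1
  have hA := vab hg le_rfl (by omega) ha
  obtain ⟨f1, f2, f3, f4, f5⟩ := tail_facts C tp le_rfl hq1 htl (by linarith) (by linarith)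
  refine m_t hg le_rfl (by omega) (XOK_add (XOK_mono f5 (by omega) fun _ _ _ h => h)
    (by rw [zat (by omega)]; linarith) (by simp [NV])) (by linarith) ?_ ?_
  · intro j a1 a2 a3
    have := f3 j (by omega) a2
    linarith
  intro hg'
  have tp' := tp.upd hg' (by simp [Hi]) (by simp)
  rw [ht]
  have ho : Ones n 1 (Function.update π BV.t (BV.a 1)) := by
    refine ⟨?_, ?_, ?_⟩ <;> grind [Function.update_apply]
  have htl' : Tail n q 1 (Function.update π BV.t (BV.a 1)) := by
    obtain ⟨s4, s5, s6, s7, s8⟩ := htl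
    refine ⟨?_, ?_, ?_, ?_, ?_⟩ <;> grind [Function.update_apply]
  obtain ⟨hT, hBi, hBU, f1, f2, f3, f4, f5, f6⟩ := O_facts C tp' le_rfl hq1 ho htl'
  have hA := ones_Av hg' ho (by omega) le_rfl le_rfl
  refine c_t hg' (by omega) hq (XOK_add (XOK_mono f5 (by omega) fun _ _ _ h => h)
    (by rw [zat (by omega)]; linarith) (by simp [NV])) f3.1 (by linarith) ?_
  exact O_clean C tp' le_rfl hq1 ho htl' (hnext _ tp' ho htl')

end

end LI


namespace LI

lemma Hi_mono {k k' : ℕ} (h : k' ≤ k) {v : BV} (hv : Hi k v) : Hi k' v := by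
  cases v <;> simp only [Hi] at * <;> omega

lemma Ones.mono {n j j' : ℕ} {π : BV → BV} (h : Ones n j π) (hj : j' ≤ j) : Ones n j' π :=
  ⟨h.t, fun i h1 h2 => h.a i h1 (by omega), fun i h1 h2 => h.b i h1 (by omega)⟩

def Run (n q : ℕ) : Prop :=
  ∀ π0 X w0 c, Ctx n q π0 X w0 → Good n π0 → Ones n (q + 1) π0 →
    π0 (BV.b (q + 1)) = bN n (q + 2) → π0 (BV.a (q + 2)) = w0 →
    (∀ π', Top n (q + 2) π0 π' → Ones n (q + 2) π' → LX n c π' (XX1 (q + 2) X w0)) →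
    LX n (c + 2 ^ (q + 1)) π0 (fun v w => Hi (q + 2) v ∧ X v w)

section
variable {n q : ℕ} {π0 π : BV → BV} {X : BV → BV → Prop} {w0 : BV}

/-- The first switches of a run. -/
lemma run_start {c : ℕ} (C : Ctx n q π0 X w0) (hg : Good n π0) (ho : Ones n (q + 1) π0)
    (hb : π0 (BV.b (q + 1)) = bN n (q + 2)) (ha : π0 (BV.a (q + 2)) = w0)
    (hnext : ∀ π', Top n (q + 2) π0 π' → StA n q 0 π' → LX n c π' (XX1 (q + 2) X w0)) :
    LX n c π0 (fun v w => Hi (q + 2) v ∧ X v w) := by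
  have hq := C.hq
  have hT := ones_T hg ho (by omega) (by omega)
  have hB : Bv n π0 (q + 1) = Bv n π0 (q + 2) + 3 / 4 :=
    vbb hg (i := q + 1) (by omega) (by omega) hb
  have e0 : (2 : ℚ) ^ (q + 1 + 1) = 2 ^ (q + 2) := rfl
  have e1 := pw (q + 2)
  have e2 := two_le_pow (show 1 ≤ q + 2 by omega)
  have e3 := two_le_pow (show 1 ≤ q + 1 by omega)
  obtain ⟨h1, h2, h3⟩ := C.hyp π0 hg (fun _ _ => rfl) (by linarith) (by linarith)
  have hAk : Av n π0 (q + 2) ≤ Bv n π0 (q + 2) := by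
    have hE : DEdgePair n (BV.a (q + 2)) w0 := by
      refine ⟨?_, by simp⟩
      rw [← ha]; exact hg.pol _ ⟨by omega, hq⟩
    rcases (rows_a hE).2 with h | h | h
    · exact absurd h C.hw
    · rw [vaa hg (by omega) hq (ha.trans h)]; exact h1
    · rw [vat hg (by omega) hq (ha.trans h)]; linarith
  have hh : ∀ i, q + 1 < i → i ≤ n → Av n π0 i ≤ Tv n π0 := by
    intro i a1 a2
    rcases Nat.lt_or_ge (q + 2) i with a3 | a3
    · exact h2 i a3 a2
    · obtain rfl : i = q + 2 := by omega
      linarith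
  have n1 := ones_NI hg ho (by omega) (by omega) hh
  have b2 : Av n π0 (q + 1 + 1) = Av n π0 (q + 2) := rfl
  have b3 : Bv n π0 (q + 1 + 1) = Bv n π0 (q + 2) := rfl
  have b4 : Av n π0 (q + 2 + 1) ≤ Bv n π0 (q + 2) := h1
  have n2 : NIa n π0 (q + 1) := ones_NIa hg ho (by omega) (by omega) (by linarith)
  have n3 : NIb n π0 (q + 1) := ⟨by linarith, by linarith⟩
  refine LX_mono (c := c + 2 + 2) (m_ab hg (i := q + 2) (by omega) hq ?_ ⟨n1.1, ?_⟩
    (by linarith) (by linarith) (by linarith) ?_) (by omega) (fun _ _ _ h => h)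
  · rintro v w hE ⟨hh, hx⟩
    exact ⟨h3 v w hE hh hx, Hi_NV hq hh⟩
  · intro j a1 a2
    rcases Nat.lt_or_ge j (q + 1) with a3 | a3
    · exact n1.2 j a1 a3
    · obtain rfl : j = q + 1 := by omega
      exact ⟨n2, n3⟩
  intro hg'
  rw [ha]
  have tp : Top n (q + 2) π0 (Function.update π0 (BV.a (q + 2)) (BV.b (q + 2))) := by
    refine ⟨hg', fun v hv => ?_, by simp⟩
    rw [Function.update_of_ne (by rintro rfl; simp [Hi] at hv)]
  have ho' : Ones n (q + 1) (Function.update π0 (BV.a (q + 2)) (BV.b (q + 2))) := by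
    obtain ⟨s1, s2, s3⟩ := ho
    refine ⟨?_, ?_, ?_⟩ <;> grind [Function.update_apply]
  have hb' : Function.update π0 (BV.a (q + 2)) (BV.b (q + 2)) (BV.b (q + 1)) = bN n (q + 2) := by
    grind [Function.update_apply]
  refine LX_mono (XX := XX1 (q + 2) X w0) ?_ le_rfl (by
    rintro v w _ (h | ⟨rfl, rfl⟩)
    · exact Or.inr h
    · exact Or.inl ⟨rfl, rfl⟩)
  clear hT hB h1 h2 h3 hAk hh n1 b2 b3 b4 n2 n3 ho hb hg
  revert hg' tp ho' hb'
  generalize Function.update π0 (BV.a (q + 2)) (BV.b (q + 2)) = π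
  intro hg tp ho hb
  have hU := top_U C tp
  have hT := ones_T hg ho (by omega) (by omega)
  have hB : Bv n π (q + 1) = Bv n π (q + 2) + 3 / 4 :=
    vbb hg (i := q + 1) (by omega) (by omega) hb
  obtain ⟨f1, f2, f3⟩ := top_facts C tp (by linarith) (by linarith)
  refine m_t hg (i := q + 2) (by omega) hq (XOK_mono f3 (by omega) fun _ _ _ h => h)
    (by linarith) ?_ ?_
  · intro j a1 a2 a3
    rcases Nat.lt_or_ge (q + 2) j with a4 | a4
    · linarith [f2 j a4 a2]
    · rw [ones_Av hg ho (by omega) a1 (by omega)]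
      linarith [two_le_pow a1]
  intro hg'
  have tp' := tp.upd hg' (by simp [Hi]) (by simp)
  rw [ho.t]
  have hA : StA n q 0 (Function.update π BV.t (BV.a (q + 2))) := by
    obtain ⟨s1, s2, s3⟩ := ho
    refine ⟨?_, ?_, ?_, ?_, ?_⟩ <;> grind [Function.update_apply]
  obtain ⟨hT, hB, h1, h2, h3⟩ := A_vals C tp' (by omega) hA
  obtain ⟨n1, n2, n3⟩ := A_NI C tp' (by omega) hA
  have b1 := h2 1 le_rfl (by omega) (by omega)
  exact c_t hg' le_rfl (by omega) (XOK_mono n3 (by omega) fun _ _ _ h => h) n1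
    (by rw [b1]; linarith) (hnext _ tp' hA)

lemma F_facts (C : Ctx n q π0 X w0) (tp : Top n (q + 2) π0 π) (ho : Ones n (q + 2) π) :
    Tv n π = Av n π (q + 2) + 2 ^ (q + 2) - 2 ∧ Bv n π (q + 1) = Av n π (q + 2) ∧
    Av n π (q + 1) = 2 ^ (q + 1) + Av n π (q + 2) ∧ NIlt n π (q + 2) ∧
    XOK n π (2 * q + 3) (XX1 (q + 2) X w0) := by
  have hg := tp.good
  have hq := C.hq
  have hU := top_U C tp
  have hT := ones_T hg ho (by omega) hq
  have hA := ones_Av hg ho hq (i := q + 1) (by omega) (by omega)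
  have hB := ones_Bv hg ho hq (i := q + 1) (by omega) (by omega)
  have e1 := pw (q + 2)
  have e2 := pw (q + 1)
  have e3 := two_le_pow (show 1 ≤ q + 2 by omega)
  have e0 : (2 : ℚ) ^ (q + 1 + 1) = 2 ^ (q + 2) := rfl
  obtain ⟨f1, f2, f3⟩ := top_facts C tp (by linarith) (by linarith)
  exact ⟨by linarith, by linarith, by linarith, ones_NI hg ho (by omega) hq f2, f3⟩

lemma F_clean (C : Ctx n q π0 X w0) (tp : Top n (q + 2) π0 π) (ho : Ones n (q + 2) π) {c : ℕ}
    (hnext : LX n c π (XX1 (q + 2) X w0)) :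
    LX n c π (addp (addp (XX1 (q + 2) X w0) (BV.b (q + 1)) (bN n (q + 2)))
      (BV.a (q + 1)) (aN n (q + 2))) := by
  have hg := tp.good
  have hq := C.hq
  have hU := top_U C tp
  obtain ⟨hT, hB, hA, f1, f2⟩ := F_facts C tp ho
  have e2 := two_le_pow (show 1 ≤ q + 1 by omega)
  have e3 := two_le_pow (show 1 ≤ q + 2 by omega)
  have n1 := f1.2 (q + 1) (by omega) (by omega)
  have n0 : NIlt n π (q + 1) := ⟨f1.1, fun j a1 a2 => f1.2 j a1 (by omega)⟩
  have b2 : Av n π (q + 1 + 1) = Av n π (q + 2) := rfl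
  have b3 : Bv n π (q + 1 + 1) = Bv n π (q + 2) := rfl
  have z1 : zB n π (BV.b (q + 1)) (bN n (q + 1 + 1)) < 0 := by
    rw [zbb (by omega)]; linarith
  refine c_a hg (Eaa (i := q + 1) (by omega) (by omega))
    (XOK_add (XOK_mono f2 (by omega) fun _ _ _ h => h) z1.le (by simp only [NV]; omega)) n0 n1.1
    (by rw [zaa (by omega)]; linarith) ?_
  exact c_b hg (Ebb (i := q + 1) (by omega) (by omega))
    (XOK_mono f2 (by omega) fun _ _ _ h => h) n0 n1.1 n1.2 z1 hnext

end

/-- The base case. -/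
lemma run_zero (n : ℕ) : Run n 0 := by
  intro π0 X w0 c C hg ho hb ha hfin
  refine run_start C hg ho hb ha ?_
  clear hg ho hb ha
  intro π tp h
  have hq := C.hq
  have hg := tp.good
  have p1 : (2 : ℚ) ^ 1 = 2 := by norm_num
  have p2 : (2 : ℚ) ^ 2 = 4 := by norm_num
  have hU := top_U C tp
  obtain ⟨hT, hB, -, h2, -⟩ := A_vals C tp le_rfl h
  obtain ⟨n1, -, n3⟩ := A_NI C tp le_rfl h
  have b1 := h2 1 le_rfl (by omega) (by omega)
  simp only [zero_add, p1, p2, mul_zero] at *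
  refine LX_mono (c := c + 2 + 2 + 2 + 2) (m_aa hg (i := 1) (by omega) (by omega)
    (XOK_mono n3 (by omega) fun _ _ _ h => h)
    ⟨n1, fun j a1 a2 => by omega⟩ (by norm_num; linarith) (by norm_num; linarith)
    (by norm_num; linarith) ?_) (by omega) (fun _ _ _ h => h)
  intro hg'
  have tp' := tp.upd hg' (by simp [Hi]) (by simp)
  rw [h.ab 1 (by omega) (by omega)]
  have s1 : Function.update π (BV.a 1) (aN n (1 + 1)) BV.t = BV.a 2 := by
    have := h.t; grind [Function.update_apply]
  have s2 : Function.update π (BV.a 1) (aN n (1 + 1)) (BV.a 1) = aN n 2 := by simp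
  have s3 : Function.update π (BV.a 1) (aN n (1 + 1)) (BV.b 1) = bN n 2 := by
    have := h.bb; grind [Function.update_apply]
  clear hU hT hB h2 n1 n3 b1 h hg tp
  revert hg' tp' s1 s2 s3
  generalize Function.update π (BV.a 1) (aN n (1 + 1)) = π
  intro hg tp s1 s2 s3
  have hU : Av n π 2 = 2 ^ 2 + Bv n π 2 := top_U C tp
  have hT := vt hg hq s1
  have hA : Av n π 1 = Av n π 2 := vaa hg le_rfl (by omega) s2
  have hB : Bv n π 1 = Bv n π 2 + 3 / 4 := vbb hg le_rfl (by omega) s3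
  have tf := top_facts C tp
  simp only [zero_add, p1, p2, mul_zero] at hU hT hA hB tf
  obtain ⟨f1, f2, f3⟩ := tf (by linarith) (by linarith)
  have n1 : NIt n π := by
    intro j a1 a2
    rcases Nat.lt_or_ge 2 j with a4 | a4
    · exact f2 j a4 a2
    · interval_cases j <;> linarith
  have n2 : NIlt n π 1 := ⟨n1, fun j a1 a2 => by omega⟩
  have n3 : NIa n π 1 := by refine ⟨?_, ?_, ?_⟩ <;> norm_num <;> linarith
  refine c_a hg (Eab (i := 1) (by omega) (by omega)) (XOK_mono f3 (by omega) fun _ _ _ h => h)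
    n2 n3 (by rw [zab (by omega)]; linarith) ?_
  refine m_ba hg (i := 1) (by omega) (by omega) (XOK_mono f3 (by omega) fun _ _ _ h => h)
    n2 n3 (by norm_num; linarith) (by norm_num; linarith) ?_
  intro hg'
  have tp' := tp.upd hg' (by simp [Hi]) (by simp)
  rw [s3]
  have s1' : Function.update π (BV.b 1) (aN n (1 + 1)) BV.t = BV.a 2 := by
    grind [Function.update_apply]
  have s2' : Function.update π (BV.b 1) (aN n (1 + 1)) (BV.a 1) = aN n 2 := by
    grind [Function.update_apply]
  have s3' : Function.update π (BV.b 1) (aN n (1 + 1)) (BV.b 1) = aN n 2 := by simp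
  clear hU hT hB hA n1 n2 n3 f1 f2 f3 tf s1 s2 s3 hg tp
  revert hg' tp' s1' s2' s3'
  generalize Function.update π (BV.b 1) (aN n (1 + 1)) = π
  intro hg tp s1 s2 s3
  have hU : Av n π 2 = 2 ^ 2 + Bv n π 2 := top_U C tp
  have hT := vt hg hq s1
  have hA : Av n π 1 = Av n π 2 := vaa hg le_rfl (by omega) s2
  have hB : Bv n π 1 = Av n π 2 := vba hg le_rfl (by omega) s3
  have tf := top_facts C tp
  simp only [zero_add, p1, p2, mul_zero] at hU hT hA hB tf
  obtain ⟨f1, f2, f3⟩ := tf (by linarith) (by linarith)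
  have n1 : NIt n π := by
    intro j a1 a2
    rcases Nat.lt_or_ge 2 j with a4 | a4
    · exact f2 j a4 a2
    · interval_cases j <;> linarith
  have zb : zB n π (BV.b 1) (bN n (1 + 1)) ≤ 0 := by
    rw [zbb (by omega)]; norm_num; linarith
  refine m_ab hg (i := 1) le_rfl (by omega)
    (XOK_add (XOK_mono f3 (by omega) fun _ _ _ h => h) zb (by simp [NV]))
    ⟨n1, fun j a1 a2 => by omega⟩ (by linarith) (by norm_num; linarith) (by linarith) ?_
  intro hg'
  have tp' := tp.upd hg' (by simp [Hi]) (by simp)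
  rw [s2]
  have s1' : Function.update π (BV.a 1) (BV.b 1) BV.t = BV.a 2 := by
    grind [Function.update_apply]
  have s2' : Function.update π (BV.a 1) (BV.b 1) (BV.b 1) = aN n 2 := by
    grind [Function.update_apply]
  have s3' : Function.update π (BV.a 1) (BV.b 1) (BV.a 1) = BV.b 1 := by simp
  clear hU hT hB hA n1 f1 f2 f3 tf s1 s2 s3 hg tp zb
  revert hg' tp' s1' s2' s3'
  generalize Function.update π (BV.a 1) (BV.b 1) = π
  intro hg tp s1 s2 s3
  have hU : Av n π 2 = 2 ^ 2 + Bv n π 2 := top_U C tp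
  have hT := vt hg hq s1
  have hA : Av n π 1 = 2 ^ 1 + Bv n π 1 := vab hg le_rfl (by omega) s3
  have hB : Bv n π 1 = Av n π 2 := vba hg le_rfl (by omega) s2
  have tf := top_facts C tp
  simp only [zero_add, p1, p2, mul_zero] at hU hT hA hB tf
  obtain ⟨f1, f2, f3⟩ := tf (by linarith) (by linarith)
  have zb : zB n π (BV.b 1) (bN n (1 + 1)) ≤ 0 := by
    rw [zbb (by omega)]; norm_num; linarith
  have za : zB n π (BV.a 1) (aN n (1 + 1)) ≤ 0 := by
    rw [zaa (by omega)]; norm_num; linarith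
  refine m_t hg (i := 1) le_rfl (by omega) (XOK_add (XOK_add (XOK_mono f3 (by omega)
    fun _ _ _ h => h) zb (by simp [NV])) za (by simp [NV])) (by linarith) ?_ ?_
  · intro j a1 a2 a3
    rcases Nat.lt_or_ge 2 j with a4 | a4
    · linarith [f2 j a4 a2]
    · obtain rfl : j = 2 := by omega
      linarith
  intro hg'
  have tp' := tp.upd hg' (by simp [Hi]) (by simp)
  rw [s1]
  have ak := tp.ak
  have ho : Ones n 2 (Function.update π BV.t (BV.a 1)) := by
    refine ⟨by simp, ?_, ?_⟩
    · intro i a1 a2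
      interval_cases i <;> grind [Function.update_apply]
    · intro i a1 a2
      interval_cases i; grind [Function.update_apply]
  obtain ⟨g1, g2, g3, g4, g5⟩ := F_facts C tp' ho
  have hU : Av n (Function.update π BV.t (BV.a 1)) 2 =
    2 ^ 2 + Bv n (Function.update π BV.t (BV.a 1)) 2 := top_U C tp'
  simp only [zero_add, p1, p2, mul_zero] at hU g1 g2 g3
  refine c_t hg' (by omega) hq (XOK_add (XOK_add (XOK_mono g5 (by omega)
    fun _ _ _ h => h) ?_ (by simp [NV])) ?_ (by simp [NV])) g4.1 (by linarith) ?_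
  · change zB n _ (BV.b 1) (bN n (1 + 1)) ≤ 0
    rw [zbb (by omega)]; norm_num; linarith
  · change zB n _ (BV.a 1) (aN n (1 + 1)) ≤ 0
    rw [zaa (by omega)]; norm_num; linarith
  exact F_clean C tp' ho (hfin _ tp' ho)

end LI


namespace LI

section
variable {n q : ℕ} {π0 π : BV → BV} {X : BV → BV → Prop} {w0 : BV}

lemma top_trans (tp : Top n (q + 2) π0 π) {l : ℕ} (hl : l ≤ q + 1) {π' : BV → BV}
    (hg : Good n π') (ha : ∀ v, Hi l v → π' v = π v) : Top n (q + 2) π0 π' :=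
  ⟨hg, fun v hv => (ha v (Hi_mono (by omega) hv)).trans (tp.agree v hv),
    (ha _ (by simp only [Hi]; omega)).trans tp.ak⟩

lemma tail_trans {l : ℕ} (hl : l ≤ q) {π' : BV → BV} (ht : Tail n q l π)
    (ha : ∀ v, Hi l v → π' v = π v) : Tail n q l π' := by
  refine ⟨fun j h1 h2 => ?_, ?_, fun j h1 h2 => ?_, ?_, ?_⟩
  · rw [ha _ (by simp only [Hi]; omega), ht.tt j h1 h2]
  · rw [ha _ (by simp only [Hi]; omega), ht.aa]
  · rw [ha _ (by simp only [Hi]; omega), ht.bb j h1 h2]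
  · rw [ha _ (by simp only [Hi]; omega), ht.bq]
  · rw [ha _ (by simp only [Hi]; omega), ht.bk]

lemma O_chain (C : Ctx n q π0 X w0) {c : ℕ} (hRun : ∀ p, p < q → Run n p)
    (hfin : ∀ π', Top n (q + 2) π0 π' → Ones n q π' → Tail n q q π' →
      LX n (c + 2 ^ q) π' (XM n q X w0 (q + 1))) :
    ∀ d j, j + d = q → 1 ≤ j → ∀ π, Top n (q + 2) π0 π → Ones n j π → Tail n q j π →
      LX n (c + 2 ^ (q + 1) - 2 ^ j) π (XM n q X w0 (j + 1)) := by
  have hq := C.hq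
  intro d
  induction d with
  | zero =>
    intro j hd hj π tp ho ht
    obtain rfl : j = q := by omega
    refine LX_mono (hfin π tp ho ht) ?_ fun _ _ _ h => h
    rw [pow_succ]; omega
  | succ d ih =>
    intro j hd hj π tp ho ht
    obtain ⟨p, rfl⟩ : ∃ p, j = p + 1 := ⟨j - 1, by omega⟩
    have hC : Ctx n p π (XM n q X w0 (p + 2)) BV.t := by
      refine ⟨by omega, ?_, by simp⟩
      intro π' hg' ha r1 r2
      have tp' := top_trans tp (by omega) hg' ha
      have ht' := tail_trans (by omega) (ht.mono (show p + 1 ≤ p + 2 by omega)) ha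
      obtain ⟨-, -, t3, -⟩ := tail_B C tp' (by omega) (by omega) ht'
      have hB := t3 (p + 2) le_rfl (by omega)
      have hqi : ((p + 2 : ℕ) : ℚ) ≤ q := by exact_mod_cast (show p + 2 ≤ q by omega)
      have e := two_le_pow (show 1 ≤ p + 2 by omega)
      obtain ⟨f1, f2, f3, f4, f5⟩ := tail_facts C tp' (by omega) (by omega) ht'
        (by linarith) (by linarith)
      exact ⟨f1, f3, fun v w hE _ hx => (f5 v w hE hx).1⟩
    have hle : 2 ^ (p + 1 + 1) ≤ 2 ^ (q + 1) := Nat.pow_le_pow_right (by omega) (by omega)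
    have hpp : 2 ^ (p + 1 + 1) = 2 ^ (p + 1) * 2 := pow_succ _ _
    refine LX_mono (hRun p (by omega) π (XM n q X w0 (p + 2)) BV.t
      (c + 2 ^ (q + 1) - 2 ^ (p + 1 + 1)) hC tp.good ho
      (ht.bb (p + 1) le_rfl (by omega)) (ht.tt (p + 2) (by omega) (by omega)) ?_) (by omega) ?_
    · intro π' tp1 ho1
      have tp' := top_trans tp (by omega) tp1.good tp1.agree
      have ht' := tail_trans (by omega) (ht.mono (show p + 1 ≤ p + 2 by omega)) tp1.agree
      refine LX_mono (O_clean C tp' (by omega) (by omega) ho1 ht'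
        (ih (p + 2) (by omega) (by omega) π' tp' ho1 ht')) le_rfl ?_
      rintro v w _ (h | ⟨_, h⟩)
      · exact Or.inr h
      · exact Or.inl h
    · intro v w _ h
      refine ⟨?_, h⟩
      rcases h with (⟨rfl, rfl⟩ | ⟨h, -⟩) | ⟨i, h1, h2, rfl, rfl⟩ | ⟨rfl, rfl⟩
      · simp only [Hi]; omega
      · exact Hi_mono (by omega) h
      · exact h1
      · simp only [Hi]; omega

/-- The last part of a run. -/
lemma O_last {p : ℕ} (C : Ctx n (p + 1) π0 X w0) {c : ℕ} (hRun : Run n p)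
    (hfin : ∀ π', Top n (p + 3) π0 π' → Ones n (p + 3) π' → LX n c π' (XX1 (p + 3) X w0))
    (tp : Top n (p + 3) π0 π) (ho : Ones n (p + 1) π) (ht : Tail n (p + 1) (p + 1) π) :
    LX n (c + 2 ^ (p + 1)) π (XM n (p + 1) X w0 (p + 2)) := by
  have hq : p + 3 ≤ n := C.hq
  have hg := tp.good
  have hU : Av n π (p + 3) = 2 ^ (p + 3) + Bv n π (p + 3) := top_U C tp
  obtain ⟨hT, hB, -, f1, -, n1, n2, f5, f6⟩ := O_facts C tp (by omega) le_rfl ho ht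
  obtain ⟨t1, t2, -, -⟩ := tail_B C tp (by omega) le_rfl ht
  have x1 : Av n π (p + 1 + 1) = Av n π (p + 2) := rfl
  have x2 : Av n π (p + 1 + 2) = Av n π (p + 3) := rfl
  have x3 : Av n π (p + 2 + 1) = Av n π (p + 3) := rfl
  have y1 : Bv n π (p + 1 + 1) = Bv n π (p + 2) := rfl
  have y2 : Bv n π (p + 1 + 2) = Bv n π (p + 3) := rfl
  have y3 : Bv n π (p + 2 + 1) = Bv n π (p + 3) := rfl
  have e1 : (2 : ℚ) ^ (p + 1 + 1) = 2 ^ (p + 2) := rfl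
  have e2 : (2 : ℚ) ^ (p + 1 + 2) = 2 ^ (p + 3) := rfl
  have e3 : (2 : ℚ) ^ (p + 3) = 2 * 2 ^ (p + 2) := pw (p + 2)
  have e4 : (2 : ℚ) ^ (p + 2) = 2 * 2 ^ (p + 1) := pw (p + 1)
  have e5 := two_le_pow (show 1 ≤ p + 1 by omega)
  simp only [sub_self, mul_zero, add_zero] at hB
  have n3 : NIb n π (p + 1) := ⟨by linarith, by linarith⟩
  have n4 : NIlt n π (p + 2) := by
    refine ⟨n1.1, fun j a1 a2 => ?_⟩
    rcases Nat.lt_or_ge j (p + 1) with a3 | a3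
    · exact n1.2 j a1 a3
    · obtain rfl : j = p + 1 := by omega
      exact ⟨n2, n3⟩
  have n5 : NIa n π (p + 2) := ⟨by linarith, by linarith, by linarith⟩
  refine LX_mono (XX := addp (XX1 (p + 3) X w0) (BV.a (p + 2)) (BV.b (p + 2))) ?_ le_rfl (by
    rintro v w _ (h | ⟨i, h1, h2, h3⟩ | h)
    · exact Or.inl h
    · omega
    · exact Or.inr h)
  refine c_a hg (Eab (by omega) (by omega)) (XOK_mono f6 (by omega) fun _ _ _ h => h) n4 n5
    (by rw [zab (by omega)]; linarith) ?_
  refine LX_mono (c := c + 2 ^ (p + 1) + 2 + 2) (m_ba hg (i := p + 2) (by omega) (by omega)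
    (XOK_mono f6 (by omega) fun _ _ _ h => h) n4 n5 (by linarith) (by linarith) ?_) (by omega)
    fun _ _ _ h => h
  intro hg'
  have bk : π (BV.b (p + 2)) = bN n (p + 3) := ht.bk
  rw [bk]
  have tp' := tp.upd hg' (by simp [Hi]) (by simp)
  have ho' : Ones n (p + 1) (Function.update π (BV.b (p + 2)) (aN n (p + 2 + 1))) := by
    obtain ⟨s1, s2, s3⟩ := ho
    refine ⟨?_, ?_, ?_⟩ <;> grind [Function.update_apply]
  have u1 : Function.update π (BV.b (p + 2)) (aN n (p + 2 + 1)) (BV.a (p + 2)) = aN n (p + 3) := by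
    have := ht.aa; grind [Function.update_apply]
  have u2 : Function.update π (BV.b (p + 2)) (aN n (p + 2 + 1)) (BV.b (p + 2)) = aN n (p + 3) := by
    simp
  have u3 : Function.update π (BV.b (p + 2)) (aN n (p + 2 + 1)) (BV.b (p + 1)) = aN n (p + 2) := by
    have := ht.bq; grind [Function.update_apply]
  clear hU hT hB n1 n2 n3 n4 n5 f1 f5 f6 t1 t2 x1 x2 x3 y1 y2 y3 ho ht hg tp bk
  revert hg' tp' ho' u1 u2 u3
  generalize Function.update π (BV.b (p + 2)) (aN n (p + 2 + 1)) = π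
  intro hg tp ho u1 u2 u3
  have hU : Av n π (p + 3) = 2 ^ (p + 3) + Bv n π (p + 3) := top_U C tp
  have x1 : Av n π (p + 1 + 1) = Av n π (p + 2) := rfl
  have x2 : Av n π (p + 1 + 2) = Av n π (p + 3) := rfl
  have y1 : Bv n π (p + 1 + 1) = Bv n π (p + 2) := rfl
  have y3 : Bv n π (p + 2 + 1) = Bv n π (p + 3) := rfl
  have hT := ones_T hg ho (by omega) (by omega)
  have hA2 : Av n π (p + 2) = Av n π (p + 3) := vaa hg (by omega) (by omega) u1
  have hB2 : Bv n π (p + 2) = Av n π (p + 3) := vba hg (by omega) (by omega) u2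
  have hB1 : Bv n π (p + 1) = Av n π (p + 2) := vba hg (by omega) (by omega) u3
  obtain ⟨f1, f2, f3⟩ := top_facts C tp (by linarith) (by linarith)
  have hh : ∀ i, p + 1 < i → i ≤ n → Av n π i ≤ Tv n π := by
    intro i a1 a2
    rcases Nat.lt_or_ge (p + 3) i with a3 | a3
    · exact f2 i a3 a2
    · obtain rfl | rfl : i = p + 2 ∨ i = p + 3 := by omega
      · linarith
      · linarith
  have n1 := ones_NI hg ho (by omega) (by omega) hh
  have n2 : NIa n π (p + 1) := ones_NIa hg ho (by omega) (by omega) (by linarith)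
  have zb : zB n π (BV.b (p + 2)) (bN n (p + 2 + 1)) ≤ 0 := by
    rw [zbb (by omega)]; linarith
  refine m_bb hg (i := p + 1) (by omega) (by omega) (XOK_add (XOK_mono f3 (by omega)
    fun _ _ _ h => h) zb (by simp only [NV]; omega)) n1 n2 (by linarith) (by linarith) ?_
  intro hg'
  rw [u3]
  have tp' := tp.upd hg' (by simp [Hi]) (by simp)
  have ho' : Ones n (p + 1) (Function.update π (BV.b (p + 1)) (bN n (p + 1 + 1))) := by
    obtain ⟨s1, s2, s3⟩ := ho
    refine ⟨?_, ?_, ?_⟩ <;> grind [Function.update_apply]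
  have u1' : Function.update π (BV.b (p + 1)) (bN n (p + 1 + 1)) (BV.a (p + 2)) = aN n (p + 3) := by
    grind [Function.update_apply]
  have u2' : Function.update π (BV.b (p + 1)) (bN n (p + 1 + 1)) (BV.b (p + 2)) = aN n (p + 3) := by
    grind [Function.update_apply]
  have u3' : Function.update π (BV.b (p + 1)) (bN n (p + 1 + 1)) (BV.b (p + 1)) = bN n (p + 2) := by
    simp
  clear hU hT hA2 hB2 hB1 n1 n2 f1 f2 f3 zb hh x1 x2 y1 y3 ho u1 u2 u3 hg tp
  revert hg' tp' ho' u1' u2' u3'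
  generalize Function.update π (BV.b (p + 1)) (bN n (p + 1 + 1)) = π
  intro hg tp ho u1 u2 u3
  have hU : Av n π (p + 3) = 2 ^ (p + 3) + Bv n π (p + 3) := top_U C tp
  have x1 : Av n π (p + 1 + 1) = Av n π (p + 2) := rfl
  have x2 : Av n π (p + 1 + 2) = Av n π (p + 3) := rfl
  have y1 : Bv n π (p + 1 + 1) = Bv n π (p + 2) := rfl
  have y3 : Bv n π (p + 2 + 1) = Bv n π (p + 3) := rfl
  have hT := ones_T hg ho (by omega) (by omega)
  have hA2 : Av n π (p + 2) = Av n π (p + 3) := vaa hg (by omega) (by omega) u1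
  have hB2 : Bv n π (p + 2) = Av n π (p + 3) := vba hg (by omega) (by omega) u2
  have hB1 : Bv n π (p + 1) = Bv n π (p + 2) + 3 / 4 := vbb hg (by omega) (by omega) u3
  obtain ⟨f1, f2, f3⟩ := top_facts C tp (by linarith) (by linarith)
  have hh : ∀ i, p + 1 < i → i ≤ n → Av n π i ≤ Tv n π := by
    intro i a1 a2
    rcases Nat.lt_or_ge (p + 3) i with a3 | a3
    · exact f2 i a3 a2
    · obtain rfl | rfl : i = p + 2 ∨ i = p + 3 := by omega
      · linarith
      · linarith
  have n1 := ones_NI hg ho (by omega) (by omega) hh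
  have n2 : NIa n π (p + 1) := ones_NIa hg ho (by omega) (by omega) (by linarith)
  have zb : zB n π (BV.b (p + 2)) (bN n (p + 2 + 1)) ≤ 0 := by
    rw [zbb (by omega)]; linarith
  refine c_b hg (Eba (i := p + 1) (by omega) (by omega)) (XOK_add (XOK_mono f3 (by omega)
    fun _ _ _ h => h) zb (by simp only [NV]; omega)) n1 n2 ⟨by linarith, by linarith⟩
    (by rw [zba (by omega)]; linarith) ?_
  have hC : Ctx n p π (addp (XX1 (p + 3) X w0) (BV.b (p + 2)) (bN n (p + 3))) (aN n (p + 3)) := by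
    refine ⟨by omega, ?_, aN_ne_b⟩
    intro π' hg' ha r1 r2
    have tp' := top_trans tp le_rfl hg' ha
    have hU' : Av n π' (p + 3) = 2 ^ (p + 3) + Bv n π' (p + 3) := top_U C tp'
    have hB' : Bv n π' (p + 2) = Av n π' (p + 3) :=
      vba hg' (by omega) (by omega) ((ha _ (by simp [Hi])).trans u2)
    have x2 : Av n π' (p + 1 + 2) = Av n π' (p + 3) := rfl
    have x3 : Av n π' (p + 2 + 1) = Av n π' (p + 3) := rfl
    have y3 : Bv n π' (p + 2 + 1) = Bv n π' (p + 3) := rfl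
    have e6 : (2 : ℚ) ^ (p + 2 + 1) = 2 ^ (p + 3) := rfl
    obtain ⟨f1, f2, f3⟩ := top_facts C tp' (by linarith) (by linarith)
    refine ⟨by linarith, ?_, ?_⟩
    · intro j a1 a2
      rcases Nat.lt_or_ge (p + 3) j with a3 | a3
      · exact f2 j a3 a2
      · obtain rfl : j = p + 3 := by omega
        linarith
    · rintro v w hE - (h | ⟨rfl, rfl⟩)
      · exact (f3 v w hE h).1
      · change zB n _ (BV.b (p + 2)) (bN n (p + 2 + 1)) ≤ 0
        rw [zbb (by omega)]; linarith
  refine LX_mono (hRun π _ _ c hC hg ho u3 u1 ?_) le_rfl ?_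
  · intro π' tp1 ho1
    have tp' := top_trans tp le_rfl tp1.good tp1.agree
    have ak := tp'.ak
    have bk := (tp1.agree (BV.b (p + 2)) (by simp [Hi])).trans u2
    have ho' : Ones n (p + 3) π' := by
      obtain ⟨s1, s2, s3⟩ := ho1
      refine ⟨s1, fun i a1 a2 => ?_, fun i a1 a2 => ?_⟩
      · rcases Nat.lt_or_ge i (p + 3) with a3 | a3
        · exact s2 i a1 (by omega)
        · obtain rfl : i = p + 3 := by omega
          exact ak
      · rcases Nat.lt_or_ge i (p + 2) with a3 | a3
        · exact s3 i a1 (by omega)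
        · obtain rfl : i = p + 2 := by omega
          exact bk
    refine LX_mono (F_clean C tp' ho' (hfin π' tp' ho')) le_rfl ?_
    rintro v w _ (h | ⟨_, h⟩)
    · exact Or.inr h
    · exact Or.inl h
  · intro v w _ h
    refine ⟨?_, h⟩
    rcases h with (⟨rfl, rfl⟩ | ⟨h, -⟩) | ⟨rfl, rfl⟩
    · simp only [Hi]; omega
    · exact Hi_mono (by omega) h
    · simp [Hi]

end

lemma run_all (n q : ℕ) : Run n q := by
  induction q using Nat.strong_induction_on with
  | _ q ih =>
  rcases Nat.eq_zero_or_pos q with rfl | hq1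
  · exact run_zero n
  intro π0 X w0 c C hg ho hb ha hfin
  refine run_start C hg ho hb ha ?_
  intro π tp h
  refine A_loop C ?_ q 0 (by omega) π tp h
  intro π tp h
  refine A_to_C C hq1 ?_ tp h
  refine C_loop C ?_ q hq1 le_rfl
  intro π tp h
  have hpp : 2 ^ (q + 1) = 2 ^ q * 2 := pow_succ _ _
  have hp1 : 1 ≤ 2 ^ q := Nat.one_le_two_pow
  refine LX_mono (C_to_O C (c := c + 2 ^ (q + 1) - 2 ^ 1) hq1 ?_ tp h) (by omega) fun _ _ _ h => h
  intro π tp ho ht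
  refine O_chain C ih ?_ (q - 1) 1 (by omega) le_rfl π tp ho ht
  intro π tp ho ht
  obtain ⟨p, rfl⟩ : ∃ p, q = p + 1 := ⟨q - 1, by omega⟩
  exact O_last C (ih p (by omega)) hfin tp ho ht

end LI


namespace LI

/-- The canonical policies for `2 ^ j - 1`. -/
structure StM (n j : ℕ) (π : BV → BV) : Prop where
  ones : Ones n j π
  aa : ∀ i, j < i → i ≤ n → π (BV.a i) = aN n (i + 1)
  ba : ∀ i, 1 ≤ i → j ≤ i → i ≤ n → π (BV.b i) = aN n (i + 1)

lemma zero_A {n l : ℕ} {π : BV → BV} (hg : Good n π)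
    (h : ∀ i, l < i → i ≤ n → π (BV.a i) = aN n (i + 1)) :
    ∀ i, l < i → i ≤ n + 1 → Av n π i = 0 := by
  have : ∀ d i, i + d = n + 1 → l < i → Av n π i = 0 := by
    intro d
    induction d with
    | zero =>
      intro i hd _
      obtain rfl : i = n + 1 := by omega
      exact Av_end
    | succ d ih =>
      intro i hd hi
      rw [vaa hg (by omega) (by omega) (h i hi (by omega))]
      exact ih (i + 1) (by omega) (by omega)
  exact fun i h1 h2 => this (n + 1 - i) i (by omega) h1

lemma good_pi0 {n : ℕ} (hn : 1 ≤ n) : Good n (pi0 n) := by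
  have hp : IsBPolicy n (pi0 n) := by
    intro u hu
    cases u with
    | t => exact (Et le_rfl hn).1
    | s => exact Or.inr (Or.inr (Or.inr (Or.inr (Or.inr (Or.inr (Or.inr ⟨rfl, rfl⟩))))))
    | d => exact Or.inr (Or.inr (Or.inr (Or.inr (Or.inr (Or.inr (Or.inl ⟨rfl, rfl⟩))))))
    | a i => exact (Eaa hu.1 hu.2).1
    | b i => exact (Eba hu.1 hu.2).1
  have hr : ∀ d i, i + d = n + 1 → ∃ k, (pi0 n)^[k] (aN n i) = BV.s := by
    intro d
    induction d with
    | zero =>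
      intro i hd
      obtain rfl : i = n + 1 := by omega
      exact ⟨0, by simp [aN]⟩
    | succ d ih =>
      intro i hd
      obtain ⟨k, hk⟩ := ih (i + 1) (by omega)
      refine ⟨k + 1, ?_⟩
      rw [Function.iterate_succ_apply, aN_le (by omega)]
      exact hk
  have hu : BWeakUnichain n (pi0 n) := by
    intro u hu
    cases u with
    | t =>
      obtain ⟨k, hk⟩ := hr n 1 (by omega)
      refine ⟨k + 1, ?_⟩
      rw [Function.iterate_succ_apply]
      rw [aN_le hn] at hk
      exact hk
    | s => exact ⟨0, rfl⟩
    | d => exact ⟨1, rfl⟩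
    | a i =>
      obtain ⟨k, hk⟩ := hr (n + 1 - i) i (by have := hu.2; omega)
      rw [aN_le hu.2] at hk
      exact ⟨k, hk⟩
    | b i =>
      obtain ⟨k, hk⟩ := hr (n - i) (i + 1) (by have := hu.2; omega)
      refine ⟨k + 1, ?_⟩
      rw [Function.iterate_succ_apply]
      exact hk
  refine ⟨hp, hu, fun v hv => ?_⟩
  have := bval_unique hp hu (fun _ => 0) rfl (by
    intro v hv hs
    cases v with
    | t => simp [pi0, rB]
    | s => exact absurd rfl hs
    | d => simp [pi0, rB]
    | a i => simp [pi0, rB_aa]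
    | b i => simp [pi0, rB_ba]) v hv
  exact this.le

def XE : BV → BV → Prop := fun _ _ => False

lemma XOK_XE {n N : ℕ} {π : BV → BV} : XOK n π N XE := fun _ _ _ h => h.elim

lemma M_loop (n : ℕ) : ∀ d j, j + d = n → 1 ≤ j → ∀ π, Good n π → StM n j π →
    LX n (2 ^ n - 2 ^ j) π XE := by
  intro d
  induction d with
  | zero =>
    intro j hd _ π _ _ S _ _ g m _ _ _
    obtain rfl : j = n := by omega
    simp
  | succ d ih =>
    intro j hd hj π hg h
    obtain ⟨p, rfl⟩ : ∃ p, j = p + 1 := ⟨j - 1, by omega⟩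
    have e5 := two_le_pow (show 1 ≤ p + 1 by omega)
    have e4 : (2 : ℚ) ^ (p + 2) = 2 * 2 ^ (p + 1) := pw (p + 1)
    have e1 : (2 : ℚ) ^ (p + 1 + 1) = 2 ^ (p + 2) := rfl
    have hle : 2 ^ (p + 2) ≤ 2 ^ n := Nat.pow_le_pow_right (by omega) (by omega)
    have hpp : 2 ^ (p + 2) = 2 ^ (p + 1) * 2 := pow_succ _ _
    obtain ⟨ho, haa, hba⟩ := h
    have hT := ones_T hg ho (by omega) (by omega)
    have hz := zero_A hg haa
    have z2 := hz (p + 1 + 1) (by omega) (by omega)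
    have hB1 := vba hg (by omega) (by omega) (hba (p + 1) (by omega) le_rfl (by omega))
    have hB2 := vba hg (i := p + 1 + 1) (by omega) (by omega)
      (hba (p + 1 + 1) (by omega) (by omega) (by omega))
    have z3 := hz (p + 1 + 1 + 1) (by omega) (by omega)
    refine LX_mono (c := 2 ^ n - 2 ^ (p + 1) + 2) (m_bb hg (i := p + 1) (by omega) (by omega)
      XOK_XE (ones_NI hg ho (by omega) (by omega) ?_)
      (ones_NIa hg ho (by omega) (by omega) (by linarith)) (by linarith) (by linarith) ?_)
      (by omega) fun _ _ _ h => h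
    · intro i a1 a2
      rw [hz i a1 (by omega)]; linarith
    intro hg'
    rw [hba (p + 1) (by omega) le_rfl (by omega)]
    have ho' : Ones n (p + 1) (Function.update π (BV.b (p + 1)) (bN n (p + 1 + 1))) := by
      obtain ⟨s1, s2, s3⟩ := ho
      refine ⟨?_, ?_, ?_⟩ <;> grind [Function.update_apply]
    have haa' : ∀ i, p + 1 < i → i ≤ n →
        Function.update π (BV.b (p + 1)) (bN n (p + 1 + 1)) (BV.a i) = aN n (i + 1) := by
      grind [Function.update_apply]
    have hba' : ∀ i, p + 2 ≤ i → i ≤ n →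
        Function.update π (BV.b (p + 1)) (bN n (p + 1 + 1)) (BV.b i) = aN n (i + 1) := by
      grind [Function.update_apply]
    have hbb' : Function.update π (BV.b (p + 1)) (bN n (p + 1 + 1)) (BV.b (p + 1)) =
        bN n (p + 2) := by simp
    clear ho haa hba hT hz z2 hB1 hB2 z3 hg
    revert hg' ho' haa' hba' hbb'
    generalize Function.update π (BV.b (p + 1)) (bN n (p + 1 + 1)) = π
    intro hg ho haa hba hbb
    have hT := ones_T hg ho (by omega) (by omega)
    have hz := zero_A hg haa
    have z2 := hz (p + 1 + 1) (by omega) (by omega)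
    have hB1 : Bv n π (p + 1) = Bv n π (p + 1 + 1) + 3 / 4 := vbb hg (by omega) (by omega) hbb
    have hB2 := vba hg (i := p + 1 + 1) (by omega) (by omega)
      (hba (p + 1 + 1) (by omega) (by omega))
    have z3 := hz (p + 1 + 1 + 1) (by omega) (by omega)
    refine c_b hg (Eba (i := p + 1) (by omega) (by omega)) XOK_XE
      (ones_NI hg ho (by omega) (by omega) ?_)
      (ones_NIa hg ho (by omega) (by omega) (by linarith)) ⟨by linarith, by linarith⟩
      (by rw [zba (by omega)]; linarith) ?_
    · intro i a1 a2
      rw [hz i a1 (by omega)]; linarith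
    have hC : Ctx n p π XE (aN n (p + 3)) := by
      refine ⟨by omega, ?_, aN_ne_b⟩
      intro π' hg' ha r1 r2
      have hz' := zero_A (l := p + 2) hg' (fun i a1 a2 =>
        (ha (BV.a i) (by simp only [Hi]; omega)).trans (haa i (by omega) a2))
      have hB' := vba hg' (i := p + 2) (by omega) (by omega)
        ((ha _ (by simp [Hi])).trans (hba (p + 2) le_rfl (by omega)))
      have z' := hz' (p + 2 + 1) (by omega) (by omega)
      refine ⟨by linarith, ?_, fun _ _ _ _ h => h.elim⟩
      intro j a1 a2
      rw [hz' j a1 (by omega)]; linarith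
    refine LX_mono (run_all n p π XE (aN n (p + 3)) (2 ^ n - 2 ^ (p + 2)) hC hg ho hbb
      (haa (p + 2) (by omega) (by omega)) ?_) (by omega) (fun _ _ _ h => h.elim)
    intro π' tp' ho'
    have hg' := tp'.good
    have haa' : ∀ i, p + 2 < i → i ≤ n → π' (BV.a i) = aN n (i + 1) := fun i a1 a2 =>
        (tp'.agree (BV.a i) (by simp only [Hi]; omega)).trans (haa i (by omega) a2)
    have hba' : ∀ i, p + 2 ≤ i → i ≤ n → π' (BV.b i) = aN n (i + 1) := fun i a1 a2 =>
        (tp'.agree (BV.b i) (by simp only [Hi]; omega)).trans (hba i (by omega) a2)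
    have hz' := zero_A hg' haa'
    have hB' := vba hg' (i := p + 2) (by omega) (by omega) (hba' (p + 2) le_rfl (by omega))
    have z' := hz' (p + 2 + 1) (by omega) (by omega)
    have hT' := ones_T hg' ho' (by omega) (by omega)
    have e6 := pw (p + 2)
    have hA' := ones_Av hg' ho' (by omega) (i := p + 2) (by omega) le_rfl
    refine LX_mono (c_a hg' (Eaa (i := p + 2) (by omega) (by omega)) XOK_XE
      (ones_NI hg' ho' (by omega) (by omega) ?_)
      (ones_NIa hg' ho' (by omega) (by omega) (by linarith))
      (by rw [zaa (by omega)]; linarith) (ih (p + 2) (by omega) (by omega) π' hg'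
        ⟨ho', haa', fun i _ a1 a2 => hba' i a1 a2⟩)) le_rfl ?_
    · intro i a1 a2
      rw [hz' i a1 (by omega)]; linarith
    · rintro v w _ (h | ⟨_, h⟩)
      · exact Or.inr h
      · exact h.elim

lemma M_zero {n : ℕ} (hn : 1 ≤ n) : LX n (2 ^ n - 1) (pi0 n) XE := by
  have hg := good_pi0 hn
  have p1 : (2 : ℚ) ^ 1 = 2 := by norm_num
  have p2 : (2 : ℚ) ^ (1 + 1) = 4 := by norm_num
  have hz := zero_A (l := 0) hg (fun i _ _ => rfl)
  have z1 := hz 1 (by omega) (by omega)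
  have z2 := hz (1 + 1) (by omega) (by omega)
  have hB := vba hg (i := 1) le_rfl hn rfl
  have hT := vt hg (i := 1) hn rfl
  have hle : 2 ^ 1 ≤ 2 ^ n := Nat.pow_le_pow_right (by omega) hn
  refine LX_mono (c := 2 ^ n - 2 ^ 1 + 2) (m_ab hg (i := 1) le_rfl hn XOK_XE
    ⟨?_, fun j a1 a2 => by omega⟩ (by linarith) (by linarith) (by linarith) ?_) (by omega)
    fun _ _ _ h => h
  · intro j a1 a2
    rw [hz j (by omega) (by omega)]; linarith
  intro hg'
  have hM : StM n 1 (Function.update (pi0 n) (BV.a 1) (BV.b 1)) := by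
    refine ⟨⟨?_, ?_, ?_⟩, ?_, ?_⟩ <;> grind [Function.update_apply, pi0]
  have hz := zero_A hg' hM.aa
  have z2 := hz (1 + 1) (by omega) (by omega)
  have hB := vba hg' (i := 1) le_rfl hn (hM.ba 1 le_rfl le_rfl hn)
  have hT := ones_T hg' hM.ones le_rfl hn
  have hA := ones_Av hg' hM.ones hn (i := 1) le_rfl le_rfl
  rw [show pi0 n (BV.a 1) = aN n (1 + 1) from rfl]
  refine c_a hg' (Eaa (i := 1) le_rfl hn) XOK_XE
      (ones_NI hg' hM.ones le_rfl hn ?_)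
      (ones_NIa hg' hM.ones le_rfl hn (by linarith))
      (by rw [zaa hn]; linarith) (M_loop n (n - 1) 1 (by omega) le_rfl _ hg' hM)
  intro i a1 a2
  rw [hz i a1 (by omega)]; linarith

end LI

/-- With probabilities `p_v = 2^{-𝒩_V(v)(n+5)}`, the Largest Increase policy iteration on
`𝔇_n` started at the twin policy of `π_0` performs at least `2^n - 1` improving switches
before terminating. -/
theorem stmt19 (n : ℕ) (hn : 1 ≤ n)
    (f : ℕ → (DV → DV)) (m : ℕ)
    (h0 : f 0 = twin (pi0 n))
    (hstep : ∀ k < m, LIStep n (pSpec n) (f k) (f (k + 1)))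
    (hterm : ∀ u u', ¬ DImproving n (pSpec n) (f m) u u') :
    2 ^ n - 1 ≤ m := by
  refine LI.M_zero hn (fun v w => w = pi0 n v) (fun _ _ _ => rfl) (fun _ _ _ h => Or.inl h)
    f m ?_ hstep hterm
  rw [h0, LI.twin_eq]
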